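/- Let A ∈ F{x,y} be irreducible and let (u, P₁, Q₁, P₂, Q₂) be a proper LINEAR differential rational parametrization of the differential curve (C,A) with mᵢ := max(ord Pᵢ, ord Qᵢ) ≥ 0 for i = 1, 2. Set R := δ-Res(f₁,f₂) ∈ F{x,y}. Then A divides R: there exists B ∈ F{x,y} with R = A·B and ord(B) < ord(R). In particular, A has degree exactly 1 in the variable x_{m₂} and degree exactly 1 in the variable y_{m₁} (so A is quasi-linear). -/

import Mathlib

/-! Write `η₁ = P₁(u)/Q₁(u)`, `η₂ = P₂(u)/Q₂(u)`, `R = δ-Res(f₁, f₂)`. The proof linearizes the problem.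
Since `u` is differentially transcendental and the characteristic is `0`, there is an `F`-linear
derivation `Δ : E → E[X]` with `Δ(Dᵏu) = Xᵏ` (`exists_symbol`). On `F⟨u⟩` it carries `D` to the
operator `twist D : p ↦ p^D + X p`, that is, to left multiplication by `X` in the ring of
differential operators `E[D]`, here modelled on `E[X]`.

Differentiating `ηᵢ Qᵢ(u) = Pᵢ(u)` shows that `Lᵢ = -Qᵢ(u) Δηᵢ` is the operator whose coefficients
are the partial derivatives of `fᵢ` at `(η, u)`. Because `fᵢ` is affine in the `u_k` and `Pᵢ/Qᵢ` is
reduced, `Lᵢ` has degree exactly `mᵢ` (`degree_symbol`). Properness says that `L₁` and `L₂`, or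
equally `Δη₁` and `Δη₂`, generate the unit left ideal (`eq_top_of_symbol_mem`). A dimension count
modulo the left ideal of `L₂` then makes `L₁, …, X^{m₂-1}L₁` together with all the `XʲL₂` linearly
independent (`linearIndependent_twist`), and likewise with the indices exchanged.

This has the following consequences.

* `R(η) = 0`, as the vector of the derivatives of `u` is in the kernel of the matrix at `η`. Move
  the coordinate `x_{m₂}` of the generic point by `1` and nothing else. Only the row of `d^{m₂}f₁`
  is affected, its pairing with that vector becomes `Q₁(u) ≠ 0`, and the other rows stay
  independent; hence `R` no longer vanishes (`aeval_deltaRes_update_x`). The same holds for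
  `y_{m₁}` (`aeval_deltaRes_update_y`).
* Each row involves one indeterminate, affinely, so `R` has order at most `m₂` in `x` and `m₁` in
  `y`, and degree at most `1` in `x_{m₂}` and in `y_{m₁}`.
* If `x` occurs in `A`, with order `s`, then `m₂ ≤ s`: otherwise the relation `A(η) = 0`, whose
  separant does not vanish at `η`, would express `Δ(Dˢη₁)` through the `Δ(Dⁱη₁)`, `i < s`, and the
  `Δ(Dʲη₂)` (`le_of_separant_ne_zero`). So `R` lies in the general component of `A` without
  exceeding its order in `x`, and Ritt reduction gives `A ∣ R` (`dvd_of_mem_sat`). If `x` did not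
  occur in `A`, then `R ∈ [A]` would still vanish at the moved point (`dvd_of_generic`).

Finally `R = A B` and `A(η) = 0`. If `x_{m₂}` did not occur in `A`, then `A`, hence `R`, would
vanish at the moved point. Thus `A` takes the full degree `1` of `R` in `x_{m₂}`, and in the same
way in `y_{m₁}`, leaving for `B` only variables `x_l` with `l < m₂` and `y_l` with `l < m₁`.
-/

open MvPolynomial

noncomputable section

namespace DiffCurve

variable (F : Type*) {E : Type*} [Field F] [Field E] [Algebra F E]

/-- `F⟨S⟩`: the intermediate field of `E/F` generated by all iterated derivatives of
elements of `S`. -/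
def genDF (D : Derivation ℤ E E) (S : Set E) : IntermediateField F E :=
  IntermediateField.adjoin F {x | ∃ s ∈ S, ∃ k : ℕ, (⇑D)^[k] s = x}

/-- `u` is differentially transcendental over `F`. -/
def DiffTrans (D : Derivation ℤ E E) (u : E) : Prop :=
  AlgebraicIndependent F (fun k : ℕ => (⇑D)^[k] u)

/-- Evaluation of `P ∈ F{u}` at `v`: the `F`-algebra map sending `u_k ↦ D^k v`. -/
def evalD (D : Derivation ℤ E E) (v : E) : MvPolynomial ℕ F →ₐ[F] E :=
  aeval fun k => (⇑D)^[k] v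

/-- Evaluation of `A ∈ F{x,y}` at `(η₁, η₂)`: `x_k ↦ D^k η₁`, `y_k ↦ D^k η₂`. -/
def evalD2 (D : Derivation ℤ E E) (η₁ η₂ : E) : MvPolynomial (Fin 2 × ℕ) F →ₐ[F] E :=
  aeval fun p => (⇑D)^[p.2] (if p.1 = 0 then η₁ else η₂)

variable {F}

/-- The order of `P ∈ F{u}`: the largest `k` such that `u_k` occurs (`⊥` if none). -/
def ordU (P : MvPolynomial ℕ F) : WithBot ℕ := P.vars.max

/-- `ord_x` (for `i = 0`) resp. `ord_y` (for `i = 1`) of `A ∈ F{x,y}`. -/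
def ordIdx (i : Fin 2) (A : MvPolynomial (Fin 2 × ℕ) F) : WithBot ℕ :=
  ((A.vars.filter fun v => v.1 = i).image Prod.snd).max

/-- `ord(A) = max(ord_x A, ord_y A)`. -/
def ordXY (A : MvPolynomial (Fin 2 × ℕ) F) : WithBot ℕ :=
  max (ordIdx 0 A) (ordIdx 1 A)

/-- The separant of `A` w.r.t. `x`: `∂A/∂x_s` where `s = ord_x A` (junk value `1` if
`ord_x A = ⊥`). -/
def sepX (A : MvPolynomial (Fin 2 × ℕ) F) : MvPolynomial (Fin 2 × ℕ) F :=
  WithBot.recBotCoe 1 (fun s => pderiv ((0 : Fin 2), s) A) (ordIdx 0 A)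

/-- The differential ideal `[A]` generated by `A`, for a derivation `d`. -/
def diffIdeal {R : Type*} [CommRing R] (d : Derivation ℤ R R) (A : R) : Ideal R :=
  Ideal.span (Set.range fun k : ℕ => (⇑d)^[k] A)

/-- The general component `sat(A) = [A] : S_A^∞` (as a set). -/
def satSet (dxy : Derivation ℤ (MvPolynomial (Fin 2 × ℕ) F) (MvPolynomial (Fin 2 × ℕ) F))
    (A : MvPolynomial (Fin 2 × ℕ) F) : Set (MvPolynomial (Fin 2 × ℕ) F) :=
  {f | ∃ m : ℕ, sepX A ^ m * f ∈ diffIdeal dxy A}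

variable (F)

/-- `(u, P₁, Q₁, P₂, Q₂)` is a differential rational parametrization of the differential
curve `(C, A)`. -/
def IsParam (D : Derivation ℤ E E)
    (dxy : Derivation ℤ (MvPolynomial (Fin 2 × ℕ) F) (MvPolynomial (Fin 2 × ℕ) F))
    (A : MvPolynomial (Fin 2 × ℕ) F) (u : E) (P₁ Q₁ P₂ Q₂ : MvPolynomial ℕ F) : Prop :=
  DiffTrans F D u ∧
  P₁ ≠ 0 ∧ Q₁ ≠ 0 ∧ IsRelPrime P₁ Q₁ ∧ P₂ ≠ 0 ∧ Q₂ ≠ 0 ∧ IsRelPrime P₂ Q₂ ∧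
  ¬ (evalD F D u P₁ / evalD F D u Q₁ ∈ (algebraMap F E).range ∧
     evalD F D u P₂ / evalD F D u Q₂ ∈ (algebraMap F E).range) ∧
  {B : MvPolynomial (Fin 2 × ℕ) F |
      evalD2 F D (evalD F D u P₁ / evalD F D u Q₁) (evalD F D u P₂ / evalD F D u Q₂) B = 0}
    = satSet dxy A

/-- A proper differential rational parametrization: additionally
`F⟨η₁, η₂⟩ = F⟨u⟩`. -/
def IsProperParam (D : Derivation ℤ E E)
    (dxy : Derivation ℤ (MvPolynomial (Fin 2 × ℕ) F) (MvPolynomial (Fin 2 × ℕ) F))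
    (A : MvPolynomial (Fin 2 × ℕ) F) (u : E) (P₁ Q₁ P₂ Q₂ : MvPolynomial ℕ F) : Prop :=
  IsParam F D dxy A u P₁ Q₁ P₂ Q₂ ∧
  genDF F D {evalD F D u P₁ / evalD F D u Q₁, evalD F D u P₂ / evalD F D u Q₂}
    = genDF F D {u}

/-- The projection `F{x,y,u} → F{x,y}` sending `u_k ↦ 0` and keeping `x_k`, `y_k`. -/
def projXY : MvPolynomial (Fin 3 × ℕ) F →ₐ[F] MvPolynomial (Fin 2 × ℕ) F :=
  aeval fun p => if h : (p.1 : ℕ) < 2 then X ((⟨p.1, h⟩ : Fin 2), p.2) else 0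

/-- The `i`-th row polynomial of the differential resultant matrix:
`d^{m₂}f₁, …, f₁, d^{m₁}f₂, …, f₂` where `f₁ = x₀·Q₁ − P₁`, `f₂ = y₀·Q₂ − P₂`
in `F{x,y,u}`. -/
def resRow (dxyu : Derivation ℤ (MvPolynomial (Fin 3 × ℕ) F) (MvPolynomial (Fin 3 × ℕ) F))
    (P₁ Q₁ P₂ Q₂ : MvPolynomial ℕ F) (m₁ m₂ : ℕ) (i : ℕ) : MvPolynomial (Fin 3 × ℕ) F :=
  if i ≤ m₂ then
    (⇑dxyu)^[m₂ - i] (X ((0 : Fin 3), 0) * rename (fun k => ((2 : Fin 3), k)) Q₁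
      - rename (fun k => ((2 : Fin 3), k)) P₁)
  else
    (⇑dxyu)^[m₁ + m₂ + 1 - i] (X ((1 : Fin 3), 0) * rename (fun k => ((2 : Fin 3), k)) Q₂
      - rename (fun k => ((2 : Fin 3), k)) P₂)

/-- The differential resultant `δ-Res(f₁, f₂) ∈ F{x,y}`: the determinant of the
`(m₁+m₂+2) × (m₁+m₂+2)` matrix whose rows are the coefficient vectors of
`d^{m₂}f₁, …, f₁, d^{m₁}f₂, …, f₂` w.r.t. `u_{m₁+m₂}, …, u_1, u_0, 1`. -/
def deltaRes (dxyu : Derivation ℤ (MvPolynomial (Fin 3 × ℕ) F) (MvPolynomial (Fin 3 × ℕ) F))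
    (P₁ Q₁ P₂ Q₂ : MvPolynomial ℕ F) (m₁ m₂ : ℕ) : MvPolynomial (Fin 2 × ℕ) F :=
  Matrix.det (Matrix.of fun i j : Fin (m₁ + m₂ + 2) =>
    if (j : ℕ) ≤ m₁ + m₂ then
      projXY F (pderiv ((2 : Fin 3), m₁ + m₂ - (j : ℕ)) (resRow F dxyu P₁ Q₁ P₂ Q₂ m₁ m₂ i))
    else projXY F (resRow F dxyu P₁ Q₁ P₂ Q₂ m₁ m₂ i))

/-- A linear homogeneous differential polynomial `L = Σ_k a_k u_k` in `F{u}`. -/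
def IsLinHom {F : Type*} [Field F] (L : MvPolynomial ℕ F) : Prop :=
  ∀ m ∈ L.support, ∃ k : ℕ, m = Finsupp.single k 1

/-! ### Derivations with prescribed values -/

/-- In characteristic `0` derivations extend uniquely from a polynomial ring on a transcendence
basis, as the extension is formally étale. -/
theorem exists_deriv_basis {F E ι M : Type*} [Field F] [CharZero F] [Field E] [Algebra F E]
    [AddCommGroup M] [Module E M] [Module F M] [IsScalarTower F E M] {v : ι → E}
    (hb : IsTranscendenceBasis F v) (w : ι → M) :
    ∃ δ : Derivation F E M, ∀ i, δ (v i) = w i := by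
  let _ : Algebra (MvPolynomial ι F) E := (aeval v).toAlgebra
  have hS : ∀ p : MvPolynomial ι F, algebraMap (MvPolynomial ι F) E p = aeval v p := fun _ => rfl
  have : IsScalarTower F (MvPolynomial ι F) E := .of_algebraMap_eq fun r => by simp [hS]
  let _ : Module (MvPolynomial ι F) M := Module.compHom M (algebraMap (MvPolynomial ι F) E)
  have : IsScalarTower (MvPolynomial ι F) E M := ⟨fun a b c => by
    rw [Algebra.smul_def, mul_smul]; rfl⟩
  have : IsScalarTower F (MvPolynomial ι F) M := ⟨fun a b c => by
    rw [← algebraMap_smul E (a • b) c, ← algebraMap_smul E b c, Algebra.smul_def a b, map_mul,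
      ← IsScalarTower.algebraMap_apply, mul_smul, algebraMap_smul]⟩
  have : Algebra.FormallyEtale (MvPolynomial ι F) E := by
    have : FaithfulSMul (MvPolynomial ι F) E := (faithfulSMul_iff_algebraMap_injective _ _).2 hb.1
    let L := FractionRing (MvPolynomial ι F)
    let _ : Algebra L E := FractionRing.liftAlgebra _ E
    have : Algebra.IsAlgebraic L E := hb.isAlgebraic_iff.2 fun i => by
      have : v i = algebraMap L E (algebraMap (MvPolynomial ι F) L (X i)) := by
        rw [← IsScalarTower.algebraMap_apply]; simp [hS]
      rw [this]
      exact isAlgebraic_algebraMap _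
    have : CharZero L := charZero_of_injective_algebraMap (FaithfulSMul.algebraMap_injective F L)
    have : Algebra.FormallyEtale L E := Algebra.FormallyEtale.of_isSeparable L E
    have : Algebra.FormallyEtale (MvPolynomial ι F) L :=
      Algebra.FormallyEtale.of_isLocalization (nonZeroDivisors _)
    exact Algebra.FormallyEtale.comp _ L _
  let dS : Derivation F (MvPolynomial ι F) M := mkDerivation F w
  have hbc := KaehlerDifferential.isBaseChange_of_formallyEtale F (MvPolynomial ι F) E
  let l : Ω[E⁄F] →ₗ[E] M := hbc.lift dS.liftKaehlerDifferential
  refine ⟨l.compDer (KaehlerDifferential.D F E), fun i => ?_⟩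
  have h1 : v i = algebraMap (MvPolynomial ι F) E (X i) := by simp [hS]
  have := hbc.lift_eq dS.liftKaehlerDifferential (KaehlerDifferential.D F _ (X i))
  rw [KaehlerDifferential.map_D, ← h1] at this
  simp [l, this, dS]

/-- In characteristic `0` there are derivations with prescribed values at an algebraically
independent family. -/
theorem exists_deriv {F E ι M : Type*} [Field F] [CharZero F] [Field E] [Algebra F E]
    [AddCommGroup M] [Module E M] [Module F M] [IsScalarTower F E M] {v : ι → E}
    (hv : AlgebraicIndependent F v) (w : ι → M) :
    ∃ δ : Derivation F E M, ∀ i, δ (v i) = w i := by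
  classical
  obtain ⟨t, ht, hb⟩ := exists_isTranscendenceBasis_superset hv.coe_range
  obtain ⟨δ, hδ⟩ := exists_deriv_basis hb
    (fun x : t => if h : ∃ i, v i = (x : E) then w h.choose else 0)
  refine ⟨δ, fun i => ?_⟩
  have h : ∃ j, v j = v i := ⟨i, rfl⟩
  have := hδ ⟨v i, ht ⟨i, rfl⟩⟩
  simp only [dif_pos h] at this
  rw [this, hv.injective h.choose_spec]

/-! ### The twisted polynomial ring -/

section Twist

variable {E : Type*} [Field E]

/-- The action of `D` on `E[X]` through the coefficients. -/
def coefD (D : Derivation ℤ E E) : Derivation ℤ (Polynomial E) (Polynomial E) :=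
  letI : Differential E := ⟨D⟩
  Differential.mapCoeffs

theorem coeff_coefD (D : Derivation ℤ E E) (p : Polynomial E) (k : ℕ) :
    (coefD D p).coeff k = D (p.coeff k) := rfl

/-- The additive operator `p ↦ p^D + X p` on `E[X]`. -/
def twist (D : Derivation ℤ E E) : Polynomial E →+ Polynomial E where
  toFun p := coefD D p + Polynomial.X * p
  map_zero' := by simp
  map_add' p q := by rw [map_add]; ring

theorem twist_apply (D : Derivation ℤ E E) (p : Polynomial E) :
    twist D p = coefD D p + Polynomial.X * p := rfl

theorem twist_smul (D : Derivation ℤ E E) (c : E) (p : Polynomial E) :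
    twist D (c • p) = c • twist D p + D c • p := by
  ext k
  cases k <;> simp [twist_apply, coeff_coefD, Polynomial.coeff_X_mul] <;> ring

theorem twist_X_pow (D : Derivation ℤ E E) (k : ℕ) :
    twist D (Polynomial.X ^ k) = Polynomial.X ^ (k + 1) := by
  have : coefD D (Polynomial.X ^ k) = 0 := by
    ext n
    rw [coeff_coefD, Polynomial.coeff_X_pow]
    split_ifs <;> simp
  rw [twist_apply, this, zero_add, pow_succ']

theorem degree_twist (D : Derivation ℤ E E) {p : Polynomial E} (n : ℕ) (h : p.degree = (n : ℕ)) :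
    (twist D p).degree = ((n + 1 : ℕ) : WithBot ℕ) := by
  have h1 : (coefD D p).degree ≤ n := by
    rw [← h, Polynomial.degree_le_iff_coeff_zero]
    intro m hm
    rw [coeff_coefD, Polynomial.coeff_eq_zero_of_degree_lt hm, map_zero]
  have h2 : (Polynomial.X * p).degree = ((n + 1 : ℕ) : WithBot ℕ) := by
    rw [Polynomial.degree_mul, h, Polynomial.degree_X]; push_cast; exact add_comm _ _
  have h3 : (coefD D p).degree < (Polynomial.X * p).degree := by
    rw [h2]
    exact h1.trans_lt (by exact_mod_cast Nat.lt_succ_self n)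
  rw [twist_apply, Polynomial.degree_add_eq_right_of_degree_lt h3, h2]

theorem degree_twist_iterate (D : Derivation ℤ E E) {p : Polynomial E} (n j : ℕ)
    (h : p.degree = (n : ℕ)) : ((twist D)^[j] p).degree = ((n + j : ℕ) : WithBot ℕ) := by
  induction j with
  | zero => simpa using h
  | succ j ih => rw [Function.iterate_succ_apply', degree_twist D _ ih, Nat.add_assoc]

theorem twist_mem_span_range (D : Derivation ℤ E E) {S : Set (Polynomial E)}
    {W : Submodule E (Polynomial E)} (hW : Submodule.span E S ≤ W)
    (h : ∀ s ∈ S, twist D s ∈ W) {p : Polynomial E} (hp : p ∈ Submodule.span E S) :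
    twist D p ∈ W := by
  induction hp using Submodule.span_induction with
  | mem x hx => exact h x hx
  | zero => simp
  | add x y _ _ hx hy => rw [map_add]; exact W.add_mem hx hy
  | smul c x hx ih =>
    rw [twist_smul]
    exact W.add_mem (W.smul_mem _ ih) (W.smul_mem _ (hW hx))

/-- The submodule of `E[X]` spanned by the iterates of `b`, the left ideal generated by `b`. -/
def leftIdeal (D : Derivation ℤ E E) (b : Polynomial E) : Submodule E (Polynomial E) :=
  Submodule.span E (Set.range fun j : ℕ => (twist D)^[j] b)

/-- The polynomials of degree `< n` are independent modulo the left ideal generated by a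
polynomial of degree `n`. -/
theorem linearIndependent_mkQ_X_pow (D : Derivation ℤ E E) {b : Polynomial E} (n : ℕ)
    (hb : b.degree = (n : ℕ)) : LinearIndependent E
      (fun i : Fin n => (leftIdeal D b).mkQ (Polynomial.X ^ (i : ℕ))) ∧
      LinearIndependent E (fun j : ℕ => (twist D)^[j] b) := by
  let S : Polynomial.Sequence E :=
    { elems' := fun k => if k < n then Polynomial.X ^ k else (twist D)^[k - n] b
      degree_eq' := fun k => by
        split_ifs with h
        · simp
        · rw [degree_twist_iterate D n _ hb, Nat.add_sub_cancel' (not_lt.1 h)] }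
  have hS1 : ∀ k < n, S k = Polynomial.X ^ k := fun k hk => if_pos hk
  have hS2 : ∀ j, S (n + j) = (twist D)^[j] b := fun j => by
    change (if n + j < n then _ else _) = _
    simp
  have hli : LinearIndependent E S := S.linearIndependent
  have e2 : (fun j : ℕ => (twist D)^[j] b) = S ∘ (n + ·) := funext fun j => (hS2 j).symm
  have e1 : (fun i : Fin n => (Polynomial.X : Polynomial E) ^ (i : ℕ)) = S ∘ Fin.val :=
    funext fun j => (hS1 j j.2).symm
  constructor
  · have h1 : LinearIndependent E (fun i : Fin n => (Polynomial.X : Polynomial E) ^ (i : ℕ)) := by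
      rw [e1]; exact hli.comp _ Fin.val_injective
    refine h1.map (f := (leftIdeal D b).mkQ) ?_
    rw [Submodule.ker_mkQ, leftIdeal, e1, e2, Set.range_comp, Set.range_comp]
    apply hli.disjoint_span_image
    rw [Set.disjoint_left]
    rintro _ ⟨i, rfl⟩ ⟨j, hj⟩
    have := i.2
    simp only at hj
    omega
  · rw [e2]; exact hli.comp _ (add_right_injective n)

/-- Let `a, b` generate the unit left ideal of the twisted polynomial ring and let `b` have
degree `n`. Then `a, Da, …, Dⁿ⁻¹a` together with all the `Dʲb` are linearly independent: modulo
the iterates of `b` the space has dimension `n`, and as soon as some `Dʳa` depends on the earlier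
ones, their span is `D`-stable, hence everything. -/
theorem linearIndependent_twist (D : Derivation ℤ E E) {a b : Polynomial E} (n : ℕ)
    (hb : b.degree = (n : ℕ))
    (H : ∀ W : Submodule E (Polynomial E), (∀ p ∈ W, twist D p ∈ W) → a ∈ W → b ∈ W → W = ⊤) :
    LinearIndependent E
      (Sum.elim (fun j : ℕ => (twist D)^[j] b) (fun i : Fin n => (twist D)^[i] a)) := by
  set N := leftIdeal D b with hN
  obtain ⟨hX, hB⟩ := linearIndependent_mkQ_X_pow D n hb
  have hbN : ∀ j, (twist D)^[j] b ∈ N := fun j => Submodule.subset_span ⟨j, rfl⟩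
  have hNst : ∀ p ∈ N, twist D p ∈ N := fun p hp => by
    refine twist_mem_span_range D le_rfl ?_ hp
    rintro _ ⟨j, rfl⟩
    simp only [← Function.iterate_succ_apply' (twist D) j b]
    exact hbN (j + 1)
  have key : ∀ r ≤ n, LinearIndependent E
      (fun i : Fin r => N.mkQ ((twist D)^[(i : ℕ)] a)) := by
    intro r hr
    induction r with
    | zero => exact linearIndependent_empty_type
    | succ r ih =>
      rw [linearIndependent_finSucc']
      refine ⟨ih (by omega), fun hmem => ?_⟩
      set T : Submodule E (Polynomial E ⧸ N) :=
        Submodule.span E (Set.range fun i : Fin r => N.mkQ ((twist D)^[(i : ℕ)] a)) with hT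
      have hmem' : N.mkQ ((twist D)^[r] a) ∈ T := hmem
      have hi : ∀ i < r, N.mkQ ((twist D)^[i] a) ∈ T := fun i hi =>
        Submodule.subset_span ⟨⟨i, hi⟩, rfl⟩
      have hi' : ∀ i ≤ r, N.mkQ ((twist D)^[i] a) ∈ T := fun i h =>
        (h.lt_or_eq).elim (hi i) (fun h => h ▸ hmem')
      have hW : T.comap N.mkQ = Submodule.span E
          ((Set.range fun i : Fin r => (twist D)^[(i : ℕ)] a)) ⊔ N := by
        have : T = (Submodule.span E
            (Set.range fun i : Fin r => (twist D)^[(i : ℕ)] a)).map N.mkQ := by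
          rw [Submodule.map_span, ← Set.range_comp]; rfl
        rw [this, Submodule.comap_map_eq, Submodule.ker_mkQ]
      have htop : T.comap N.mkQ = ⊤ := by
        apply H
        · intro p hp
          rw [hW] at hp
          obtain ⟨x, hx, y, hy, rfl⟩ := Submodule.mem_sup.1 hp
          rw [map_add]
          refine Submodule.add_mem _ ?_ ?_
          · refine twist_mem_span_range D ?_ ?_ hx
            · rw [hW]; exact le_sup_left
            · rintro _ ⟨i, rfl⟩
              simp only [← Function.iterate_succ_apply' (twist D) (i : ℕ) a]
              exact hi' _ i.2
          · rw [hW]; exact Submodule.mem_sup_right (hNst y hy)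
        · rw [Submodule.mem_comap]; exact hi' 0 (Nat.zero_le _)
        · rw [hW]; exact Submodule.mem_sup_right (hbN 0)
      have hTtop : T = ⊤ := by
        have := Submodule.map_comap_eq_of_surjective N.mkQ_surjective T
        rw [← this, htop, Submodule.map_top, Submodule.range_mkQ]
      have hfin : Module.Finite E (Polynomial E ⧸ N) :=
        Module.Finite.of_fg_top
          (hTtop ▸ Submodule.fg_span (Set.finite_range _))
      have h1 : Module.finrank E (Polynomial E ⧸ N) ≤ r := by
        have := finrank_range_le_card (R := E)
          (fun i : Fin r => N.mkQ ((twist D)^[(i : ℕ)] a))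
        rw [Set.finrank, ← hT, hTtop, finrank_top, Fintype.card_fin] at this
        exact this
      have h2 := hX.fintype_card_le_finrank
      rw [Fintype.card_fin, ← hN] at h2
      omega
  have hBN : LinearIndependent E (fun j : ℕ => (⟨(twist D)^[j] b, hbN j⟩ : N)) :=
    LinearIndependent.of_comp N.subtype hB
  exact LinearIndependent.sumElim_of_quotient hBN _ (key n le_rfl)

end Twist

/-! ### Reduction modulo the general component -/

section Reduction

variable {F : Type*} [Field F]

theorem notMem_vars_of_pderiv_eq_zero {σ : Type*} [CharZero F] {p : σ} {f : MvPolynomial σ F}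
    (h : pderiv p f = 0) : p ∉ f.vars := by
  classical
  intro hp
  obtain ⟨m, hm, hpm⟩ := (mem_vars_iff_mem_support p).1 hp
  have h1 : m p ≠ 0 := Finsupp.mem_support_iff.1 hpm
  have h2 : m - Finsupp.single p 1 + Finsupp.single p 1 = m :=
    tsub_add_cancel_of_le (Finsupp.single_le_iff.2 (Nat.one_le_iff_ne_zero.2 h1))
  have h3 := coeff_pderiv f (m - Finsupp.single p 1) (i := p)
  rw [h, h2, coeff_zero] at h3
  have h4 : ((m - Finsupp.single p 1 : σ →₀ ℕ) p : F) + 1 ≠ 0 := Nat.cast_add_one_ne_zero _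
  have h5 : coeff m f ≠ 0 := mem_support_iff.1 hm
  exact mul_ne_zero h5 h4 h3.symm

theorem notMem_vars_pderiv {σ : Type*} {p q : σ} {f : MvPolynomial σ F} (h : q ∉ f.vars) :
    q ∉ (pderiv p f).vars := by
  classical
  intro hq
  obtain ⟨m, hm, hqm⟩ := (mem_vars_iff_mem_support q).1 hq
  refine h ((mem_vars_iff_mem_support q).2 ⟨m + Finsupp.single p 1, ?_, ?_⟩)
  · rw [mem_support_iff, coeff_pderiv] at hm
    exact mem_support_iff.2 fun h0 => hm (by simp [h0])
  · rw [Finsupp.mem_support_iff] at hqm ⊢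
    simp only [Finsupp.add_apply]
    omega

/-- A derivation of the differential polynomial ring in the indeterminates `ι`. -/
def IsDiffDer {ι : Type*} (δF : Derivation ℤ F F)
    (d : Derivation ℤ (MvPolynomial (ι × ℕ) F) (MvPolynomial (ι × ℕ) F)) : Prop :=
  (∀ a : F, d (C a) = C (δF a)) ∧ ∀ (i : ι) (k : ℕ), d (X (i, k)) = X (i, k + 1)

theorem IsDiffDer.pderiv_succ {ι : Type*} {δF : Derivation ℤ F F}
    {d : Derivation ℤ (MvPolynomial (ι × ℕ) F) (MvPolynomial (ι × ℕ) F)} (hd : IsDiffDer δF d)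
    (i : ι) (k : ℕ) (P : MvPolynomial (ι × ℕ) F) :
    pderiv (i, k + 1) (d P) = d (pderiv (i, k + 1) P) + pderiv (i, k) P := by
  classical
  induction P using MvPolynomial.induction_on with
  | C a => rw [hd.1, pderiv_C, pderiv_C, pderiv_C]; simp
  | add p q hp hq => simp only [map_add, hp, hq]; ring
  | mul_X p j hp =>
    obtain ⟨j, l⟩ := j
    have e : d (pderiv (i, k + 1) (X (j, l))) = 0 := by
      rw [pderiv_X, Pi.single_apply]; split_ifs <;> simp
    have e' : pderiv (i, k + 1) (X (j, l + 1) : MvPolynomial (ι × ℕ) F)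
        = pderiv (i, k) (X (j, l)) := by
      rw [pderiv_X, pderiv_X, Pi.single_apply, Pi.single_apply]; simp
    simp only [Derivation.leibniz, smul_eq_mul, map_add, hd.2, hp, e, e']
    ring

theorem IsDiffDer.pderiv_zero {ι : Type*} {δF : Derivation ℤ F F}
    {d : Derivation ℤ (MvPolynomial (ι × ℕ) F) (MvPolynomial (ι × ℕ) F)} (hd : IsDiffDer δF d)
    (i : ι) (P : MvPolynomial (ι × ℕ) F) :
    pderiv (i, 0) (d P) = d (pderiv (i, 0) P) := by
  classical
  induction P using MvPolynomial.induction_on with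
  | C a => rw [hd.1, pderiv_C, pderiv_C]; simp
  | add p q hp hq => simp only [map_add, hp, hq]
  | mul_X p j hp =>
    obtain ⟨j, l⟩ := j
    have e : d (pderiv (i, 0) (X (j, l))) = 0 := by
      rw [pderiv_X, Pi.single_apply]; split_ifs <;> simp
    have e' : pderiv (i, 0) (X (j, l + 1) : MvPolynomial (ι × ℕ) F) = 0 := by
      rw [pderiv_X, Pi.single_apply]; simp
    simp only [Derivation.leibniz, smul_eq_mul, map_add, hd.2, hp, e, e']
    ring

/-- If `P` is free of the indeterminate `i`, so are its derivatives. -/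
theorem IsDiffDer.pderiv_iterate_eq_zero {ι : Type*} {δF : Derivation ℤ F F}
    {d : Derivation ℤ (MvPolynomial (ι × ℕ) F) (MvPolynomial (ι × ℕ) F)} (hd : IsDiffDer δF d)
    (i : ι) {P : MvPolynomial (ι × ℕ) F} (h : ∀ l, pderiv (i, l) P = 0) (k l : ℕ) :
    pderiv (i, l) (d^[k] P) = 0 := by
  induction k generalizing l with
  | zero => exact h l
  | succ k ih =>
    rw [Function.iterate_succ_apply']
    cases l with
    | zero => rw [hd.pderiv_zero, ih, map_zero]
    | succ l => rw [hd.pderiv_succ, ih, ih, map_zero, add_zero]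

/-- If `P` has order `s` in the indeterminate `i`, its `k`-th derivative has order at most `s + k`
and its coefficient at the leader is the separant of `P` (for `k ≥ 1`). -/
theorem IsDiffDer.pderiv_iterate {ι : Type*} {δF : Derivation ℤ F F}
    {d : Derivation ℤ (MvPolynomial (ι × ℕ) F) (MvPolynomial (ι × ℕ) F)} (hd : IsDiffDer δF d)
    (i : ι) (s : ℕ) {P : MvPolynomial (ι × ℕ) F} (h : ∀ l, s < l → pderiv (i, l) P = 0) (k : ℕ) :
    (∀ l, s + k < l → pderiv (i, l) (d^[k] P) = 0) ∧
      pderiv (i, s + k) (d^[k] P) = pderiv (i, s) P := by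
  induction k with
  | zero => exact ⟨h, rfl⟩
  | succ k ih =>
    rw [Function.iterate_succ_apply']
    refine ⟨fun l hl => ?_, ?_⟩
    · obtain ⟨l, rfl⟩ : ∃ l', l = l' + 1 := ⟨l - 1, by omega⟩
      rw [hd.pderiv_succ, ih.1 _ (by omega), ih.1 _ (by omega), map_zero, add_zero]
    · rw [← Nat.add_assoc, hd.pderiv_succ, ih.1 _ (by omega), ih.2, map_zero, zero_add]

theorem ordIdx_eq_coe {i : Fin 2} {A : MvPolynomial (Fin 2 × ℕ) F} {s : ℕ}
    (h : ordIdx i A = (s : WithBot ℕ)) : (i, s) ∈ A.vars ∧ ∀ l, s < l → (i, l) ∉ A.vars := by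
  constructor
  · have := Finset.mem_of_max h
    simpa using this
  · intro l hl hmem
    have : l ∈ ((A.vars.filter fun v => v.1 = i).image Prod.snd) := by simpa using hmem
    have := Finset.le_max_of_eq (b := s) this h
    omega

theorem ordIdx_eq_bot {i : Fin 2} {A : MvPolynomial (Fin 2 × ℕ) F}
    (h : ordIdx i A = ⊥) (l : ℕ) : (i, l) ∉ A.vars := by
  intro hmem
  have h1 := Finset.max_eq_bot.1 h
  have : l ∈ ((A.vars.filter fun v => v.1 = i).image Prod.snd) := by simpa using hmem
  rw [h1] at this
  simp at this

theorem aeval_eq_of_vars {σ L : Type*} [CommRing L] [Algebra F L] {f : MvPolynomial σ F}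
    {v w : σ → L} (h : ∀ p ∈ f.vars, v p = w p) : aeval v f = aeval w f :=
  eval₂Hom_congr' rfl (fun p hp _ => h p hp) rfl

theorem not_dvd_pderiv [CharZero F] {σ : Type*} {A : MvPolynomial σ F} {p : σ}
    (hp : p ∈ A.vars) : ¬ A ∣ pderiv p A := by
  classical
  have hA : A ≠ 0 := by rintro rfl; simp at hp
  have h0 : pderiv p A ≠ 0 := fun h => notMem_vars_of_pderiv_eq_zero h hp
  rintro ⟨B, hB⟩
  have hB0 : B ≠ 0 := by rintro rfl; simp [h0] at hB
  have h1 : degreeOf p (pderiv p A) < degreeOf p A := by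
    rw [degreeOf_lt_iff (Nat.pos_of_ne_zero (mem_vars_iff_degreeOf_ne_zero.1 hp))]
    intro m hm
    have h2 := mem_support_iff.1 hm
    rw [coeff_pderiv] at h2
    have h3 : coeff (m + Finsupp.single p 1) A ≠ 0 := by
      intro h; simp [h] at h2
    have h4 := monomial_le_degreeOf p (mem_support_iff.2 h3)
    simp at h4
    omega
  rw [hB, degreeOf_mul_eq hA hB0] at h1
  omega

/-- Ritt reduction: an element of the general component of `A` whose order in the first
indeterminate does not exceed that of `A` is divisible by `A`. The derivatives of `A` are
eliminated by choosing values of `x_{s+1}, x_{s+2}, …` in the function field of `A = 0`: the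
equation `dᵏA = 0` is linear in `x_{s+k}` with the separant as coefficient. -/
theorem dvd_of_mem_sat [CharZero F] {δF : Derivation ℤ F F}
    {d : Derivation ℤ (MvPolynomial (Fin 2 × ℕ) F) (MvPolynomial (Fin 2 × ℕ) F)}
    (hd : IsDiffDer δF d) {A : MvPolynomial (Fin 2 × ℕ) F} (hA : Irreducible A) {s : ℕ}
    (hs : ordIdx 0 A = (s : WithBot ℕ)) {f : MvPolynomial (Fin 2 × ℕ) F}
    (hf : ∀ l, s < l → ((0 : Fin 2), l) ∉ f.vars) (hmem : f ∈ satSet d A) : A ∣ f := by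
  classical
  obtain ⟨m, hm⟩ := hmem
  obtain ⟨hsA, hsA'⟩ := ordIdx_eq_coe hs
  have hsep : sepX A = pderiv ((0 : Fin 2), s) A := by rw [sepX, hs]; rfl
  set S := pderiv ((0 : Fin 2), s) A with hS
  have hpd := hd.pderiv_iterate 0 s (fun l hl => pderiv_eq_zero_of_notMem_vars (hsA' l hl))
  set I : Ideal (MvPolynomial (Fin 2 × ℕ) F) := Ideal.span {A} with hI
  have hprime : I.IsPrime := (Ideal.span_singleton_prime hA.ne_zero).2 hA.prime
  let L := FractionRing (MvPolynomial (Fin 2 × ℕ) F ⧸ I)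
  let π : MvPolynomial (Fin 2 × ℕ) F →ₐ[F] L :=
    (IsScalarTower.toAlgHom F (MvPolynomial (Fin 2 × ℕ) F ⧸ I) L).comp (Ideal.Quotient.mkₐ F I)
  have hπ : ∀ g, π g = 0 ↔ A ∣ g := fun g => by
    have h1 : π g = algebraMap (MvPolynomial (Fin 2 × ℕ) F ⧸ I) L (Ideal.Quotient.mk I g) := rfl
    rw [h1, FaithfulSMul.algebraMap_eq_zero_iff, Ideal.Quotient.eq_zero_iff_mem, hI,
      Ideal.mem_span_singleton]
  have hπe : ∀ g, π g = aeval (fun p => π (X p)) g := fun g =>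
    congrArg (fun h : MvPolynomial (Fin 2 × ℕ) F →ₐ[F] L => h g) (aeval_unique π)
  have hSvars : ∀ l, s < l → ((0 : Fin 2), l) ∉ S.vars := fun l hl =>
    notMem_vars_pderiv (hsA' l hl)
  have hSπ : π S ≠ 0 := fun h => not_dvd_pderiv hsA ((hπ S).1 h)
  have hagree : ∀ (g : MvPolynomial (Fin 2 × ℕ) F) (val : Fin 2 × ℕ → L),
      (∀ l, s < l → ((0 : Fin 2), l) ∉ g.vars) →
      (∀ p : Fin 2 × ℕ, (p.1 = 0 → p.2 ≤ s) → val p = π (X p)) → aeval val g = π g := by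
    intro g val hg hval
    rw [hπe]
    refine aeval_eq_of_vars fun p hp => hval p fun hp0 => ?_
    by_contra hlt
    exact hg p.2 (not_le.1 hlt) (by rwa [← hp0])
  have hval : ∀ K : ℕ, ∃ val : Fin 2 × ℕ → L,
      (∀ p : Fin 2 × ℕ, (p.1 = 0 → p.2 ≤ s) → val p = π (X p)) ∧
      ∀ k ≤ K, aeval val (d^[k] A) = 0 := by
    intro K
    induction K with
    | zero =>
      refine ⟨fun p => π (X p), fun _ _ => rfl, fun k hk => ?_⟩
      obtain rfl : k = 0 := by omega
      rw [← hπe]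
      exact (hπ A).2 dvd_rfl
    | succ K ih =>
      obtain ⟨val, hv1, hv2⟩ := ih
      set p : Fin 2 × ℕ := (0, s + (K + 1)) with hp
      set G := d^[K + 1] A with hG
      have hGp : pderiv p G = S := (hpd (K + 1)).2
      set T := G - S * X p with hT
      have hpS : p ∉ S.vars := hSvars _ (by omega)
      have hpT : p ∉ T.vars := by
        apply notMem_vars_of_pderiv_eq_zero
        rw [hT, map_sub, hGp, Derivation.leibniz, pderiv_X_self,
          pderiv_eq_zero_of_notMem_vars hpS]
        simp
      set c : L := - aeval val T / π S with hc
      have hupd : ∀ g : MvPolynomial (Fin 2 × ℕ) F, p ∉ g.vars →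
          aeval (Function.update val p c) g = aeval val g := fun g hg =>
        aeval_eq_of_vars fun q hq => Function.update_of_ne (by rintro rfl; exact hg hq) _ _
      refine ⟨Function.update val p c, fun q hq => ?_, fun k hk => ?_⟩
      · rw [Function.update_of_ne, hv1 q hq]
        rintro rfl
        have := hq rfl
        simp only [hp] at this
        omega
      · rcases hk.lt_or_eq with hlt | rfl
        · rw [hupd, hv2 k (by omega)]
          exact notMem_vars_of_pderiv_eq_zero ((hpd k).1 _ (by omega))
        · have : G = S * X p + T := by rw [hT]; ring
          rw [← hG, this, map_add, map_mul, hupd _ hpS, hupd _ hpT, aeval_X,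
            Function.update_self, hagree S val hSvars hv1, hc]
          rw [mul_div_cancel₀ _ hSπ, neg_add_cancel]
  obtain ⟨c, hc⟩ := (Finsupp.mem_ideal_span_range_iff_exists_finsupp (v := fun k => d^[k] A)).1 hm
  obtain ⟨val, hv1, hv2⟩ := hval (c.support.sup id)
  have h0 : aeval val (sepX A ^ m * f) = 0 := by
    rw [← hc, Finsupp.sum, map_sum]
    refine Finset.sum_eq_zero fun k hk => ?_
    rw [map_mul, hv2 k (Finset.le_sup (f := id) hk), mul_zero]
  rw [hsep, map_mul, map_pow, hagree S val hSvars hv1, hagree f val hf hv1] at h0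
  exact (hπ f).1 ((mul_eq_zero.1 h0).resolve_left (pow_ne_zero _ hSπ))

end Reduction

/-! ### Rows affine in `u` -/

section Rows

variable {F : Type*} [Field F]

/-- The inclusion `F{x,y} → F{x,y,u}`. -/
def inclXY : MvPolynomial (Fin 2 × ℕ) F →ₐ[F] MvPolynomial (Fin 3 × ℕ) F :=
  rename fun p => (p.1.castSucc, p.2)

/-- The point of `F{x,y,u}` with `(x,y)`-coordinates `v` and `u`-coordinates `U`. -/
def extPt {E : Type*} (v : Fin 2 × ℕ → E) (U : ℕ → E) : Fin 3 × ℕ → E :=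
  fun p => if h : (p.1 : ℕ) < 2 then v (⟨p.1, h⟩, p.2) else U p.2

theorem projXY_inclXY (z : MvPolynomial (Fin 2 × ℕ) F) : projXY F (inclXY z) = z := by
  rw [projXY, inclXY, aeval_rename]
  conv_rhs => rw [← aeval_X_left_apply z]
  congr 2
  funext p
  have : ((p.1.castSucc : Fin 3) : ℕ) < 2 := p.1.2
  simp only [Function.comp_apply, dif_pos this]
  rfl

theorem aeval_inclXY {E : Type*} [Field E] [Algebra F E] (v : Fin 2 × ℕ → E) (U : ℕ → E)
    (z : MvPolynomial (Fin 2 × ℕ) F) : aeval (extPt v U) (inclXY z) = aeval v z := by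
  rw [inclXY, aeval_rename]
  congr 2
  funext p
  have : ((p.1.castSucc : Fin 3) : ℕ) < 2 := p.1.2
  simp only [Function.comp_apply, extPt, dif_pos this]
  rfl

theorem projXY_u (k : ℕ) : projXY F (X ((2 : Fin 3), k)) = 0 := by
  simp [projXY]

theorem aeval_u {E : Type*} [Field E] [Algebra F E] (v : Fin 2 × ℕ → E) (U : ℕ → E) (k : ℕ) :
    aeval (extPt v U) (X ((2 : Fin 3), k) : MvPolynomial (Fin 3 × ℕ) F) = U k := by
  simp [extPt]

theorem aeval_rename_u {E : Type*} [Field E] [Algebra F E] (v : Fin 2 × ℕ → E) (U : ℕ → E)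
    (P : MvPolynomial ℕ F) :
    aeval (extPt v U) (rename (fun k => ((2 : Fin 3), k)) P) = aeval U P := by
  rw [aeval_rename]
  congr 2

theorem pderiv_inclXY (k : ℕ) (z : MvPolynomial (Fin 2 × ℕ) F) :
    pderiv ((2 : Fin 3), k) (inclXY z) = 0 := by
  classical
  apply pderiv_eq_zero_of_notMem_vars
  intro h
  have := vars_rename _ _ h
  simp only [Finset.mem_image, Prod.mk.injEq] at this
  obtain ⟨a, _, h1, _⟩ := this
  have h2 := congrArg Fin.val h1
  have := a.1.2
  simp at h2
  omega

theorem inclXY_deriv {δF : Derivation ℤ F F}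
    {d : Derivation ℤ (MvPolynomial (Fin 2 × ℕ) F) (MvPolynomial (Fin 2 × ℕ) F)}
    {d' : Derivation ℤ (MvPolynomial (Fin 3 × ℕ) F) (MvPolynomial (Fin 3 × ℕ) F)}
    (hd : IsDiffDer δF d) (hd' : IsDiffDer δF d') (z : MvPolynomial (Fin 2 × ℕ) F) :
    d' (inclXY z) = inclXY (d z) := by
  induction z using MvPolynomial.induction_on with
  | C a => rw [hd.1, inclXY, rename_C, rename_C, hd'.1]
  | add p q hp hq => simp only [map_add, hp, hq]
  | mul_X p j hp =>
    have e : d' (inclXY (X j)) = inclXY (d (X j)) := by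
      obtain ⟨i, l⟩ := j
      rw [hd.2, inclXY, rename_X, rename_X, hd'.2]
    simp only [Derivation.leibniz, smul_eq_mul, map_add, map_mul, hp, e]

/-- `G = c + ∑_{k<n} g_k u_k` with `c` and the `g_k` in the space `V` of polynomials in `x, y`. -/
def IsRow (V : Submodule F (MvPolynomial (Fin 2 × ℕ) F)) (n : ℕ)
    (G : MvPolynomial (Fin 3 × ℕ) F) : Prop :=
  ∃ c ∈ V, ∃ g : ℕ → MvPolynomial (Fin 2 × ℕ) F, (∀ k, g k ∈ V) ∧ (∀ k, n ≤ k → g k = 0) ∧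
    G = inclXY c + ∑ k ∈ Finset.range n, inclXY (g k) * X ((2 : Fin 3), k)

theorem IsRow.deriv {δF : Derivation ℤ F F}
    {d : Derivation ℤ (MvPolynomial (Fin 2 × ℕ) F) (MvPolynomial (Fin 2 × ℕ) F)}
    {d' : Derivation ℤ (MvPolynomial (Fin 3 × ℕ) F) (MvPolynomial (Fin 3 × ℕ) F)}
    (hd : IsDiffDer δF d) (hd' : IsDiffDer δF d')
    {V W : Submodule F (MvPolynomial (Fin 2 × ℕ) F)} (hVW : V ≤ W) (hdV : ∀ z ∈ V, d z ∈ W)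
    {n : ℕ} {G : MvPolynomial (Fin 3 × ℕ) F} (h : IsRow V n G) : IsRow W (n + 1) (d' G) := by
  obtain ⟨c, hc, g, hg, hgn, rfl⟩ := h
  refine ⟨d c, hdV c hc, fun k => d (g k) + (if k = 0 then 0 else g (k - 1)), fun k => ?_,
    fun k hk => ?_, ?_⟩
  · dsimp only
    split_ifs
    · simpa using hdV _ (hg k)
    · exact W.add_mem (hdV _ (hg k)) (hVW (hg _))
  · dsimp only
    rw [hgn k (by omega), if_neg (by omega), hgn (k - 1) (by omega)]
    simp
  · simp only [map_add, map_sum, Derivation.leibniz, inclXY_deriv hd hd', hd'.2, smul_eq_mul,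
      add_mul, Finset.sum_add_distrib]
    congr 1
    rw [Finset.sum_range_succ (fun k => inclXY (d (g k)) * X ((2 : Fin 3), k)), hgn n le_rfl,
      Finset.sum_range_succ' (fun k => inclXY (if k = 0 then 0 else g (k - 1)) * X ((2 : Fin 3), k))]
    simp only [Nat.add_sub_cancel, if_true, map_zero, zero_mul, add_zero, Nat.add_eq_zero_iff,
      one_ne_zero, and_false, if_false]
    rw [add_comm]
    congr 1
    exact Finset.sum_congr rfl fun k _ => by ring

theorem pderiv_row {n : ℕ}
    {c : MvPolynomial (Fin 2 × ℕ) F} {g : ℕ → MvPolynomial (Fin 2 × ℕ) F}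
    (hgn : ∀ k, n ≤ k → g k = 0) (k : ℕ) :
    pderiv ((2 : Fin 3), k)
      (inclXY c + ∑ k ∈ Finset.range n, inclXY (g k) * X ((2 : Fin 3), k)) = inclXY (g k) := by
  classical
  simp only [map_add, map_sum, Derivation.leibniz, pderiv_inclXY, pderiv_X, Pi.single_apply,
    smul_eq_mul, mul_zero, add_zero, zero_add, Prod.mk.injEq, true_and, mul_ite, mul_one,
    Finset.sum_ite_eq', Finset.mem_range]
  split_ifs with h
  · rfl
  · rw [hgn k (by omega), map_zero]

theorem projXY_row {n : ℕ}
    {c : MvPolynomial (Fin 2 × ℕ) F} {g : ℕ → MvPolynomial (Fin 2 × ℕ) F} :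
    projXY F (inclXY c + ∑ k ∈ Finset.range n, inclXY (g k) * X ((2 : Fin 3), k)) = c := by
  simp [map_sum, projXY_inclXY, projXY_u]

theorem IsRow.projXY_mem {V : Submodule F (MvPolynomial (Fin 2 × ℕ) F)} {n : ℕ}
    {G : MvPolynomial (Fin 3 × ℕ) F} (h : IsRow V n G) : projXY F G ∈ V := by
  obtain ⟨c, hc, g, hg, hgn, rfl⟩ := h
  rwa [projXY_row]

theorem IsRow.projXY_pderiv_mem {V : Submodule F (MvPolynomial (Fin 2 × ℕ) F)} {n : ℕ}
    {G : MvPolynomial (Fin 3 × ℕ) F} (h : IsRow V n G) (k : ℕ) :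
    projXY F (pderiv ((2 : Fin 3), k) G) ∈ V := by
  obtain ⟨c, hc, g, hg, hgn, rfl⟩ := h
  rw [pderiv_row hgn, projXY_inclXY]
  exact hg k

theorem IsRow.aeval_pderiv {E : Type*} [Field E] [Algebra F E] (v : Fin 2 × ℕ → E) (U : ℕ → E)
    {V : Submodule F (MvPolynomial (Fin 2 × ℕ) F)} {n : ℕ}
    {G : MvPolynomial (Fin 3 × ℕ) F} (h : IsRow V n G) (k : ℕ) :
    aeval v (projXY F (pderiv ((2 : Fin 3), k) G))
      = aeval (extPt v U) (pderiv ((2 : Fin 3), k) G) := by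
  obtain ⟨c, hc, g, hg, hgn, rfl⟩ := h
  rw [pderiv_row hgn, projXY_inclXY, aeval_inclXY]

theorem IsRow.pderiv_eq_zero {V : Submodule F (MvPolynomial (Fin 2 × ℕ) F)} {n : ℕ}
    {G : MvPolynomial (Fin 3 × ℕ) F} (h : IsRow V n G) {k : ℕ} (hk : n ≤ k) :
    pderiv ((2 : Fin 3), k) G = 0 := by
  obtain ⟨c, hc, g, hg, hgn, rfl⟩ := h
  rw [pderiv_row hgn, hgn k hk, map_zero]

/-- Pairing the coefficient vector of `G` with `(U, 1)` evaluates `G`. -/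
theorem IsRow.aeval_eq {E : Type*} [Field E] [Algebra F E] (v : Fin 2 × ℕ → E) (U : ℕ → E)
    {V : Submodule F (MvPolynomial (Fin 2 × ℕ) F)} {n N : ℕ} (hN : n ≤ N)
    {G : MvPolynomial (Fin 3 × ℕ) F} (h : IsRow V n G) :
    ∑ k ∈ Finset.range N, aeval v (projXY F (pderiv ((2 : Fin 3), k) G)) * U k
      + aeval v (projXY F G) = aeval (extPt v U) G := by
  obtain ⟨c, hc, g, hg, hgn, rfl⟩ := h
  simp only [pderiv_row hgn, projXY_inclXY, projXY_row]
  rw [add_comm]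
  simp only [map_add, map_sum, map_mul, aeval_inclXY, aeval_u]
  congr 1
  symm
  refine Finset.sum_subset (Finset.range_mono hN) fun k _ hk => ?_
  rw [hgn k (by simpa using hk), map_zero, zero_mul]

/-- The span of `1` and the `n + 1` lowest derivatives of the `i`-th indeterminate. -/
def linSpan (F : Type*) [Field F] (i : Fin 2) (n : ℕ) : Submodule F (MvPolynomial (Fin 2 × ℕ) F) :=
  Submodule.span F (insert 1 ((fun l => X (i, l)) '' Set.Iic n))

theorem one_mem_linSpan (i : Fin 2) (n : ℕ) : 1 ∈ linSpan F i n :=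
  Submodule.subset_span (Set.mem_insert _ _)

theorem X_mem_linSpan (i : Fin 2) {n l : ℕ} (h : l ≤ n) : X (i, l) ∈ linSpan F i n :=
  Submodule.subset_span (Set.mem_insert_of_mem _ ⟨l, h, rfl⟩)

theorem linSpan_mono (i : Fin 2) (n : ℕ) : linSpan F i n ≤ linSpan F i (n + 1) :=
  Submodule.span_mono (Set.insert_subset_insert
    (Set.image_mono (Set.Iic_subset_Iic.2 (Nat.le_succ n))))

theorem deriv_mem_linSpan {δF : Derivation ℤ F F}
    {d : Derivation ℤ (MvPolynomial (Fin 2 × ℕ) F) (MvPolynomial (Fin 2 × ℕ) F)}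
    (hd : IsDiffDer δF d) (i : Fin 2) (n : ℕ) (z : MvPolynomial (Fin 2 × ℕ) F)
    (hz : z ∈ linSpan F i n) : d z ∈ linSpan F i (n + 1) := by
  induction hz using Submodule.span_induction with
  | mem z h =>
    rcases h with rfl | ⟨l, hl, rfl⟩
    · rw [d.map_one_eq_zero]; exact zero_mem _
    · simp only [hd.2]
      exact X_mem_linSpan i (Nat.succ_le_succ hl)
  | zero => rw [map_zero]; exact zero_mem _
  | add a b _ _ ha hb => rw [map_add]; exact add_mem ha hb
  | smul c a ha' ha =>
    rw [smul_eq_C_mul, Derivation.leibniz, hd.1, smul_eq_mul, smul_eq_mul, mul_comm a,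
      ← smul_eq_C_mul, ← smul_eq_C_mul]
    exact add_mem (Submodule.smul_mem _ _ ha) (Submodule.smul_mem _ _ (linSpan_mono i n ha'))

theorem degreeOf_linSpan (i : Fin 2) (n : ℕ) {z : MvPolynomial (Fin 2 × ℕ) F}
    (hz : z ∈ linSpan F i n) (p : Fin 2 × ℕ) :
    degreeOf p z ≤ if p.1 = i ∧ p.2 ≤ n then 1 else 0 := by
  classical
  induction hz using Submodule.span_induction with
  | mem z h =>
    rcases h with rfl | ⟨l, hl, rfl⟩
    · simp
    · simp only [degreeOf_X]
      split_ifs with h1 h2 h2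
      · exact le_rfl
      · subst h1; exact absurd ⟨rfl, hl⟩ h2
      · exact Nat.zero_le _
      · exact le_rfl
  | zero => simp
  | add a b _ _ ha hb => exact (degreeOf_add_le _ _ _).trans (max_le ha hb)
  | smul c a ha' ha =>
    rw [smul_eq_C_mul]
    exact (degreeOf_C_mul_le _ _ _).trans ha

theorem coeff_eq_zero_of_linear {P : MvPolynomial ℕ F} (hP : P.totalDegree ≤ 1) {s : ℕ →₀ ℕ}
    (hs : s ≠ 0) (k : ℕ) : coeff (s + Finsupp.single k 1) P = 0 := by
  by_contra h
  have h1 := (le_totalDegree (mem_support_iff.2 h)).trans hP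
  rw [Finsupp.sum_add_index' (fun _ => rfl) (fun _ _ _ => rfl),
    Finsupp.sum_single_index rfl] at h1
  have h3 : s.sum (fun _ e => e) = 0 := by omega
  refine hs (Finsupp.ext fun l => ?_)
  by_contra hl
  exact hl (Finset.sum_eq_zero_iff.1 h3 l (Finsupp.mem_support_iff.2 hl))

theorem pderiv_of_linear {P : MvPolynomial ℕ F} (hP : P.totalDegree ≤ 1) (k : ℕ) :
    pderiv k P = C (coeff (Finsupp.single k 1) P) := by
  classical
  ext s
  rw [coeff_pderiv, coeff_C]
  split_ifs with h
  · subst h; simp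
  · rw [coeff_eq_zero_of_linear hP (Ne.symm h)]; simp

/-- A differential polynomial of total degree at most `1` and order at most `m`, in coordinates. -/
theorem eq_linear {P : MvPolynomial ℕ F} (hP : P.totalDegree ≤ 1) {m : ℕ}
    (hm : ordU P ≤ (m : WithBot ℕ)) :
    P = C (coeff 0 P) + ∑ k ∈ Finset.range (m + 1), C (coeff (Finsupp.single k 1) P) * X k := by
  classical
  have h0 : ∀ k, m < k → coeff (Finsupp.single k 1) P = 0 := by
    intro k hk
    by_contra h
    have h1 : k ∈ P.vars := (mem_vars_iff_mem_support k).2 ⟨_, mem_support_iff.2 h, by simp⟩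
    have h2 : k ≤ m := WithBot.coe_le_coe.1 ((Finset.le_max h1).trans hm)
    omega
  ext s
  simp only [coeff_add, coeff_C, coeff_sum, coeff_C_mul, coeff_X]
  by_cases hs : s = 0
  · subst hs
    simp
  by_cases hs' : ∃ k, s = Finsupp.single k 1
  · obtain ⟨k, rfl⟩ := hs'
    rw [if_neg (Ne.symm hs), zero_add]
    simp only [Finsupp.single_left_inj one_ne_zero, mul_ite, mul_one, mul_zero,
      Finset.sum_ite_eq', Finset.mem_range]
    split_ifs with hk
    · rfl
    · exact h0 k (by omega)
  · rw [if_neg (Ne.symm hs), zero_add, Finset.sum_eq_zero]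
    · obtain ⟨k, hk⟩ := Finsupp.ne_iff.1 hs
      have hle : Finsupp.single k 1 ≤ s :=
        Finsupp.single_le_iff.2 (Nat.one_le_iff_ne_zero.2 hk)
      have h2 : s = s - Finsupp.single k 1 + Finsupp.single k 1 := (tsub_add_cancel_of_le hle).symm
      rw [h2]
      refine coeff_eq_zero_of_linear hP (fun h4 => hs' ⟨k, ?_⟩) k
      rw [h2, h4, zero_add]
    · intro k _
      rw [if_neg fun h => hs' ⟨k, h.symm⟩, mul_zero]

theorem isRow_base (i : Fin 2) {P Q : MvPolynomial ℕ F} (hP : P.totalDegree ≤ 1)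
    (hQ : Q.totalDegree ≤ 1) {m : ℕ} (hm : max (ordU P) (ordU Q) = (m : WithBot ℕ)) :
    IsRow (linSpan F i 0) (m + 1) (X (i.castSucc, 0) * rename (fun k => ((2 : Fin 3), k)) Q
      - rename (fun k => ((2 : Fin 3), k)) P) := by
  have hP' := eq_linear hP (hm ▸ le_max_left _ _)
  have hQ' := eq_linear hQ (hm ▸ le_max_right _ _)
  have hmem : ∀ a b : F, C a * X (i, 0) - C b ∈ linSpan F i 0 := fun a b => by
    rw [← smul_eq_C_mul, ← mul_one (C b), ← smul_eq_C_mul]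
    exact sub_mem (Submodule.smul_mem _ _ (X_mem_linSpan i le_rfl))
      (Submodule.smul_mem _ _ (one_mem_linSpan i 0))
  refine ⟨C (coeff 0 Q) * X (i, 0) - C (coeff 0 P), hmem _ _,
    fun k => C (coeff (Finsupp.single k 1) Q) * X (i, 0) - C (coeff (Finsupp.single k 1) P),
    fun k => hmem _ _, fun k hk => ?_, ?_⟩
  · have h0 : ∀ R : MvPolynomial ℕ F, ordU R ≤ (m : WithBot ℕ) →
        coeff (Finsupp.single k 1) R = 0 := by
      intro R hR
      by_contra h
      have : k ∈ R.vars := (mem_vars_iff_mem_support k).2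
        ⟨_, mem_support_iff.2 h, by simp⟩
      have h1 := (Finset.le_max this).trans hR
      have h2 : k ≤ m := WithBot.coe_le_coe.1 h1
      omega
    dsimp only
    rw [h0 P (hm ▸ le_max_left _ _), h0 Q (hm ▸ le_max_right _ _)]
    simp
  · conv_lhs => rw [hP', hQ']
    simp only [inclXY, map_add, map_sub, map_mul, map_sum, rename_C, rename_X, mul_add,
      Finset.mul_sum, sub_mul, Finset.sum_sub_distrib]
    have : ∀ k, X (i.castSucc, 0) * (C (coeff (Finsupp.single k 1) Q) * X ((2 : Fin 3), k))
      = C (coeff (Finsupp.single k 1) Q) * X (i.castSucc, 0) * X ((2 : Fin 3), k) := fun k => by ring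
    simp only [this]
    ring

theorem isRow_iterate {δF : Derivation ℤ F F}
    {d : Derivation ℤ (MvPolynomial (Fin 2 × ℕ) F) (MvPolynomial (Fin 2 × ℕ) F)}
    {d' : Derivation ℤ (MvPolynomial (Fin 3 × ℕ) F) (MvPolynomial (Fin 3 × ℕ) F)}
    (hd : IsDiffDer δF d) (hd' : IsDiffDer δF d') (i : Fin 2) {n : ℕ}
    {G : MvPolynomial (Fin 3 × ℕ) F} (h : IsRow (linSpan F i 0) n G) (k : ℕ) :
    IsRow (linSpan F i k) (n + k) (d'^[k] G) := by
  induction k with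
  | zero => exact h
  | succ k ih =>
    rw [Function.iterate_succ_apply']
    exact ih.deriv hd hd' (linSpan_mono i k) (deriv_mem_linSpan hd i k)

end Rows

/-! ### Determinants of coefficient matrices -/

section Det

variable {F : Type*} [Field F]

/-- If exactly one row of `M` pairs nontrivially with `w` and the other rows are independent, then
`M` is nonsingular. -/
theorem det_ne_zero_of_pairing {n K : Type*} [Fintype n] [DecidableEq n] [Field K]
    (M : Matrix n n K) (w : n → K) (r : n) (hr : ∑ j, M r j * w j ≠ 0)
    (h0 : ∀ i ≠ r, ∑ j, M i j * w j = 0)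
    (hli : LinearIndependent K (fun i : {i // i ≠ r} => M i)) : M.det ≠ 0 := by
  intro hdet
  obtain ⟨v, hv, hvM⟩ := Matrix.exists_vecMul_eq_zero_iff.2 hdet
  have h1 : ∀ j, ∑ i, v i * M i j = 0 := fun j => congrFun hvM j
  have h2 : ∑ i, v i * ∑ j, M i j * w j = 0 := by
    simp only [Finset.mul_sum]
    rw [Finset.sum_comm]
    refine Finset.sum_eq_zero fun j _ => ?_
    rw [← zero_mul (w j), ← h1 j, Finset.sum_mul]
    exact Finset.sum_congr rfl fun i _ => by ring
  rw [Finset.sum_eq_single r (fun i _ hi => by rw [h0 i hi, mul_zero]) (by simp)] at h2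
  have hvr : v r = 0 := (mul_eq_zero.1 h2).resolve_right hr
  have h3 : ∑ i : {i // i ≠ r}, v i • M i = 0 := by
    funext j
    rw [Finset.sum_apply, Pi.zero_apply, ← h1 j]
    rw [Fintype.sum_eq_add_sum_subtype_ne (fun i => v i * M i j) r, hvr, zero_mul, zero_add]
    rfl
  have h4 := Fintype.linearIndependent_iff.1 hli _ h3
  apply hv
  funext i
  by_cases hi : i = r
  · rw [hi, hvr, Pi.zero_apply]
  · exact h4 ⟨i, hi⟩

theorem degreeOf_det_le {n σ : Type*} [Fintype n] [DecidableEq n]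
    (M : Matrix n n (MvPolynomial σ F)) (p : σ) (b : n → ℕ)
    (h : ∀ i j, degreeOf p (M i j) ≤ b i) : degreeOf p M.det ≤ ∑ i, b i := by
  rw [Matrix.det_apply]
  refine (degreeOf_sum_le _ _ _).trans (Finset.sup_le fun τ _ => ?_)
  have h1 : degreeOf p (∏ i, M (τ i) i) ≤ ∑ i, b i := by
    rw [← Equiv.sum_comp τ b]
    exact (degreeOf_prod_le _ _ _).trans (Finset.sum_le_sum fun i _ => h _ _)
  rcases Int.units_eq_one_or (Equiv.Perm.sign τ) with h2 | h2 <;> rw [h2]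
  · simpa using h1
  · simpa [degreeOf_neg] using h1

/-- The matrix of coefficients of `G₀, …, G_{N+1}` with respect to `u_N, …, u_0, 1`. -/
def coeffMat (N : ℕ) (G : Fin (N + 2) → MvPolynomial (Fin 3 × ℕ) F) :
    Matrix (Fin (N + 2)) (Fin (N + 2)) (MvPolynomial (Fin 2 × ℕ) F) :=
  Matrix.of fun i j => if (j : ℕ) ≤ N then
      projXY F (pderiv ((2 : Fin 3), N - (j : ℕ)) (G i))
    else projXY F (G i)

variable {E : Type*} [Field E] [Algebra F E]

theorem coeffMat_pairing {N : ℕ} {G : Fin (N + 2) → MvPolynomial (Fin 3 × ℕ) F}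
    {V : Submodule F (MvPolynomial (Fin 2 × ℕ) F)} {n : ℕ} (hn : n ≤ N + 1)
    (v : Fin 2 × ℕ → E) (U : ℕ → E) {i : Fin (N + 2)} (hG : IsRow V n (G i)) :
    ∑ j, aeval v (coeffMat N G i j) * (if (j : ℕ) ≤ N then U (N - j) else 1)
      = aeval (extPt v U) (G i) := by
  rw [← hG.aeval_eq v U hn]
  have := Fin.sum_univ_eq_sum_range (fun j => (aeval v (if j ≤ N then
      projXY F (pderiv ((2 : Fin 3), N - j) (G i)) else projXY F (G i)))
      * (if j ≤ N then U (N - j) else 1)) (N + 2)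
  refine Eq.trans this ?_
  rw [Finset.sum_range_succ, ← Finset.sum_range_reflect]
  simp only [Nat.not_succ_le_self, if_false, mul_one]
  congr 1
  refine Finset.sum_congr rfl fun k hk => ?_
  have hk' : k ≤ N := by simpa [Nat.lt_succ_iff] using hk
  have h1 : N + 1 - 1 - k ≤ N := by omega
  have h2 : N - (N + 1 - 1 - k) = k := by omega
  rw [if_pos h1, if_pos h1, h2]

theorem aeval_det_coeffMat {N : ℕ} (G : Fin (N + 2) → MvPolynomial (Fin 3 × ℕ) F)
    (v : Fin 2 × ℕ → E) :
    aeval v (coeffMat N G).det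
      = (Matrix.of fun i j => aeval v (coeffMat N G i j)).det :=
  AlgHom.map_det _ _

/-- The resultant vanishes at the points for which the system `Gᵢ = 0` has a solution `U`. -/
theorem aeval_det_eq_zero {N : ℕ} {G : Fin (N + 2) → MvPolynomial (Fin 3 × ℕ) F}
    {V : Fin (N + 2) → Submodule F (MvPolynomial (Fin 2 × ℕ) F)} {n : Fin (N + 2) → ℕ}
    (hn : ∀ i, n i ≤ N + 1) (hG : ∀ i, IsRow (V i) (n i) (G i))
    (v : Fin 2 × ℕ → E) (U : ℕ → E) (h0 : ∀ i, aeval (extPt v U) (G i) = 0) :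
    aeval v (coeffMat N G).det = 0 := by
  rw [aeval_det_coeffMat]
  refine Matrix.exists_mulVec_eq_zero_iff.1
    ⟨fun j => if (j : ℕ) ≤ N then U (N - j) else 1, fun h => ?_, ?_⟩
  · simpa using congrFun h (Fin.last (N + 1))
  · funext i
    exact (coeffMat_pairing (hn i) v U (hG i)).trans (h0 i)

/-- The resultant does not vanish at a point where all rows but one admit the common solution `U`,
provided the homogeneous parts of these rows are independent. -/
theorem aeval_det_ne_zero {N : ℕ} {G : Fin (N + 2) → MvPolynomial (Fin 3 × ℕ) F}
    {V : Fin (N + 2) → Submodule F (MvPolynomial (Fin 2 × ℕ) F)} {n : Fin (N + 2) → ℕ}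
    (hn : ∀ i, n i ≤ N + 1) (hG : ∀ i, IsRow (V i) (n i) (G i))
    (v : Fin 2 × ℕ → E) (U : ℕ → E) (r : Fin (N + 2)) (hr : aeval (extPt v U) (G r) ≠ 0)
    (h0 : ∀ i ≠ r, aeval (extPt v U) (G i) = 0) {κ : Type*} {ℓ : κ → Polynomial E}
    (hℓ : LinearIndependent E ℓ) (e : {i // i ≠ r} → κ) (he : Function.Injective e)
    (hc : ∀ i k, (ℓ (e i)).coeff k = aeval (extPt v U) (pderiv ((2 : Fin 3), k) (G i))) :
    aeval v (coeffMat N G).det ≠ 0 := by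
  rw [aeval_det_coeffMat]
  refine det_ne_zero_of_pairing _ (fun j => if (j : ℕ) ≤ N then U (N - j) else 1) r ?_ ?_ ?_
  · exact fun h => hr ((coeffMat_pairing (hn r) v U (hG r)).symm.trans h)
  · exact fun i hi => (coeffMat_pairing (hn i) v U (hG i)).trans (h0 i hi)
  · let Φ : (Fin (N + 2) → E) →ₗ[E] Polynomial E :=
      ∑ k ∈ Finset.range (N + 1), (Polynomial.monomial k).comp
        (LinearMap.proj (⟨N - k, by omega⟩ : Fin (N + 2)))
    refine LinearIndependent.of_comp Φ ?_
    have : (Φ ∘ fun i : {i // i ≠ r} =>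
        (Matrix.of fun i j => aeval v (coeffMat N G i j) : Matrix _ _ E) i) = ℓ ∘ e := by
      funext i
      ext k
      rw [Function.comp_apply, Function.comp_apply, hc, LinearMap.sum_apply,
        Polynomial.finsetSum_coeff]
      simp only [LinearMap.comp_apply, Polynomial.coeff_monomial, LinearMap.proj_apply,
        Matrix.of_apply, Finset.sum_ite_eq', Finset.mem_range]
      split_ifs with hk
      · rw [← (hG i).aeval_pderiv v U]
        have h2 : N - (N - k) = k := by omega
        simp only [coeffMat, Matrix.of_apply, Nat.sub_le, if_true, h2]
      · rw [(hG i).pderiv_eq_zero (by have := hn i; omega), map_zero]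
    rw [this]
    exact hℓ.comp e he

end Det

/-! ### The symbol of an element of `F⟨u⟩` -/

section Symbol

variable {F : Type*} [Field F] {E : Type*} [Field E] [Algebra F E]

theorem deriv_mem_of_mem_adjoin {R M : Type*} [CommRing R] [Algebra R E] [AddCommGroup M]
    [Module E M] [Module R M] (Δ : Derivation R E M) (W : Submodule E M)
    (hF : ∀ c : F, Δ (algebraMap F E c) ∈ W) {S : Set E} (hS : ∀ s ∈ S, Δ s ∈ W) {z : E}
    (hz : z ∈ IntermediateField.adjoin F S) : Δ z ∈ W := by
  induction hz using IntermediateField.adjoin_induction with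
  | mem x hx => exact hS x hx
  | algebraMap x => exact hF x
  | add x y _ _ hx hy => rw [map_add]; exact add_mem hx hy
  | inv x _ hx => rw [Derivation.leibniz_inv]; exact W.smul_mem _ hx
  | mul x y _ _ hx hy =>
    rw [Derivation.leibniz]
    exact add_mem (W.smul_mem _ hy) (W.smul_mem _ hx)

/-- The failure of `Δ` to commute with the derivations is a derivation. -/
def symbolDefect (D : Derivation ℤ E E) (Δ : Derivation F E (Polynomial E)) :
    Derivation ℤ E (Polynomial E) :=
  Derivation.mk' (((Δ.toLinearMap.toAddMonoidHom.comp D.toLinearMap.toAddMonoidHom)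
    - (twist D).comp Δ.toLinearMap.toAddMonoidHom).toIntLinearMap) fun a b => by
      change Δ (D (a * b)) - twist D (Δ (a * b))
        = a • (Δ (D b) - twist D (Δ b)) + b • (Δ (D a) - twist D (Δ a))
      simp only [Derivation.leibniz, map_add, twist_smul, smul_eq_mul, smul_sub]
      abel

theorem symbolDefect_apply (D : Derivation ℤ E E) (Δ : Derivation F E (Polynomial E)) (z : E) :
    symbolDefect D Δ z = Δ (D z) - twist D (Δ z) := rfl

/-- The symbol: the `F`-derivation `δ : E → E[X]` with `δ(Dᵏu) = Xᵏ`. On `F⟨u⟩` it turns `D` into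
the operator `twist D`. -/
theorem exists_symbol [CharZero F] (δF : Derivation ℤ F F) (D : Derivation ℤ E E)
    (hD : ∀ a : F, D (algebraMap F E a) = algebraMap F E (δF a)) {u : E} (hu : DiffTrans F D u) :
    ∃ Δ : Derivation F E (Polynomial E), (∀ k, Δ (D^[k] u) = Polynomial.X ^ k) ∧
      ∀ z ∈ genDF F D {u}, Δ (D z) = twist D (Δ z) := by
  obtain ⟨Δ, hΔ⟩ := exists_deriv hu (fun k => (Polynomial.X ^ k : Polynomial E))
  refine ⟨Δ, hΔ, fun z hz => ?_⟩
  have h := deriv_mem_of_mem_adjoin (symbolDefect D Δ) ⊥ (fun c => ?_) (fun s hs => ?_) hz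
  · rwa [Submodule.mem_bot, symbolDefect_apply, sub_eq_zero] at h
  · rw [Submodule.mem_bot, symbolDefect_apply, hD, Δ.map_algebraMap, Δ.map_algebraMap, map_zero,
      sub_zero]
  · obtain ⟨_, rfl, k, rfl⟩ := hs
    rw [Submodule.mem_bot, symbolDefect_apply, hΔ, ← Function.iterate_succ_apply' (⇑D), hΔ,
      twist_X_pow, sub_self]

theorem symbol_iterate {D : Derivation ℤ E E} {u : E} {Δ : Derivation F E (Polynomial E)}
    (hΔ : ∀ z ∈ genDF F D {u}, Δ (D z) = twist D (Δ z)) {S : Set E}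
    (hS : genDF F D S = genDF F D {u}) {s : E} (hs : s ∈ S) (i : ℕ) :
    Δ (D^[i] s) = (twist D)^[i] (Δ s) := by
  induction i with
  | zero => rfl
  | succ i ih =>
    rw [Function.iterate_succ_apply', Function.iterate_succ_apply', hΔ, ih]
    rw [← hS]
    exact IntermediateField.subset_adjoin _ _ ⟨s, hs, i, rfl⟩

/-- Properness: the symbols of differential generators of `F⟨u⟩` generate `E[X]` as a left
module. -/
theorem eq_top_of_symbol_mem {D : Derivation ℤ E E} {u : E} {Δ : Derivation F E (Polynomial E)}
    (hX : ∀ k, Δ (D^[k] u) = Polynomial.X ^ k)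
    (hΔ : ∀ z ∈ genDF F D {u}, Δ (D z) = twist D (Δ z)) {S : Set E}
    (hS : genDF F D S = genDF F D {u}) {W : Submodule E (Polynomial E)}
    (hW : ∀ p ∈ W, twist D p ∈ W) (hSW : ∀ s ∈ S, Δ s ∈ W) : W = ⊤ := by
  have h1 : ∀ k, (Polynomial.X ^ k : Polynomial E) ∈ W := by
    intro k
    rw [← hX k]
    refine deriv_mem_of_mem_adjoin Δ W (fun c => ?_) (fun t ht => ?_)
      (hS.symm ▸ IntermediateField.subset_adjoin _ _ ⟨u, rfl, k, rfl⟩ :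
        D^[k] u ∈ genDF F D S)
    · rw [Δ.map_algebraMap]; exact zero_mem _
    · obtain ⟨s, hs, i, rfl⟩ := ht
      rw [symbol_iterate hΔ hS hs]
      have : ∀ i, (twist D)^[i] (Δ s) ∈ W := fun i => by
        induction i with
        | zero => exact hSW s hs
        | succ i ih => rw [Function.iterate_succ_apply']; exact hW _ ih
      exact this i
  rw [eq_top_iff]
  intro p _
  rw [p.as_sum_range_C_mul_X_pow]
  refine sum_mem fun k _ => ?_
  rw [← Polynomial.smul_eq_C_mul]
  exact W.smul_mem _ (h1 k)

/-- Chain rule when only the value at the indeterminate `p` contributes. -/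
theorem deriv_aeval {σ : Type*} (Δ : Derivation F E E) (v : σ → E) (p : σ)
    (G : MvPolynomial σ F) (h : ∀ q ∈ G.vars, q ≠ p → Δ (v q) = 0) :
    Δ (aeval v G) = aeval v (pderiv p G) * Δ (v p) := by
  classical
  have hsum : ∃ s : Finset σ, ∀ t, s ⊆ t →
      Δ (aeval v G) = ∑ q ∈ t, aeval v (pderiv q G) * Δ (v q) := by
    clear h
    induction G using MvPolynomial.induction_on with
    | C a =>
      refine ⟨∅, fun t _ => ?_⟩
      simp
    | add f g hf hg =>
      obtain ⟨s, hs⟩ := hf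
      obtain ⟨s', hs'⟩ := hg
      refine ⟨s ∪ s', fun t ht => ?_⟩
      rw [map_add, map_add, hs t (Finset.union_subset_left ht),
        hs' t (Finset.union_subset_right ht), ← Finset.sum_add_distrib]
      exact Finset.sum_congr rfl fun q _ => by rw [map_add, map_add, add_mul]
    | mul_X f j hf =>
      obtain ⟨s, hs⟩ := hf
      refine ⟨insert j s, fun t ht => ?_⟩
      have hj : j ∈ t := ht (Finset.mem_insert_self _ _)
      have h1 : ∑ q ∈ t, aeval v (pderiv q (X j : MvPolynomial σ F)) * Δ (v q) = Δ (v j) := by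
        rw [Finset.sum_eq_single j]
        · simp
        · intro q _ hq
          rw [pderiv_X_of_ne hq.symm, map_zero, zero_mul]
        · exact fun h => absurd hj h
      rw [map_mul, aeval_X, Derivation.leibniz,
        hs t ((Finset.subset_insert _ _).trans ht), smul_eq_mul, smul_eq_mul, Finset.mul_sum]
      nth_rewrite 1 [← h1]
      rw [Finset.mul_sum, ← Finset.sum_add_distrib]
      refine Finset.sum_congr rfl fun q _ => ?_
      rw [pderiv_mul, map_add, map_mul, map_mul, aeval_X]
      ring
  obtain ⟨s, hs⟩ := hsum
  rw [hs (s ∪ {p}) Finset.subset_union_left, Finset.sum_eq_single p]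
  · intro q _ hq
    by_cases hqG : q ∈ G.vars
    · rw [h q hqG hq, mul_zero]
    · rw [pderiv_eq_zero_of_notMem_vars hqG, map_zero, zero_mul]
  · exact fun h => absurd (Finset.mem_union_right _ (Finset.mem_singleton_self p)) h

theorem coeff_symbol_aeval {D : Derivation ℤ E E} {u : E} {Δ : Derivation F E (Polynomial E)}
    (hX : ∀ k, Δ (D^[k] u) = Polynomial.X ^ k) (P : MvPolynomial ℕ F) (k : ℕ) :
    (Δ (evalD F D u P)).coeff k = evalD F D u (pderiv k P) := by
  have h := deriv_aeval ((Polynomial.lcoeff E k).compDer Δ) (fun k => D^[k] u) k P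
    (fun q _ hq => by
      change (Δ (D^[q] u)).coeff k = 0
      rw [hX, Polynomial.coeff_X_pow, if_neg (Ne.symm hq)])
  have h2 : ((Polynomial.lcoeff E k).compDer Δ) (D^[k] u) = 1 := by
    change (Δ (D^[k] u)).coeff k = 1
    rw [hX, Polynomial.coeff_X_pow, if_pos rfl]
  rw [h2, mul_one] at h
  exact h

theorem evalD_ne_zero {D : Derivation ℤ E E} {u : E} (hu : DiffTrans F D u)
    {P : MvPolynomial ℕ F} (hP : P ≠ 0) : evalD F D u P ≠ 0 := fun h =>
  hP (hu (by rw [map_zero]; exact h))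

/-- A reduced fraction of positive order is not a constant of `F`. -/
theorem notMem_range_of_coprime {D : Derivation ℤ E E} {u : E} (hu : DiffTrans F D u)
    {P Q : MvPolynomial ℕ F} (hPQ : IsRelPrime P Q) {m : ℕ}
    (hm : max (ordU P) (ordU Q) = (m : WithBot ℕ)) (a : F) :
    algebraMap F E a * evalD F D u Q ≠ evalD F D u P := by
  intro h
  have h1 : P = C a * Q := by
    apply hu
    change evalD F D u P = evalD F D u (C a * Q)
    rw [map_mul, ← h]
    congr 1
    exact (aeval_C _ a).symm
  have h2 : IsUnit Q := hPQ ⟨C a, by rw [h1, mul_comm]⟩ dvd_rfl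
  obtain ⟨c, -, hc⟩ := isUnit_iff_eq_C_of_isReduced.1 h2
  rw [hc, ← C_mul] at h1
  rw [h1, hc] at hm
  rw [ordU, ordU, vars_C, vars_C, max_self, Finset.max_empty] at hm
  exact WithBot.bot_ne_coe hm

/-- The homogeneous part of `f = x Q - P` has degree exactly `m` at the generic point. -/
theorem degree_symbol [CharZero F] {D : Derivation ℤ E E} {u : E} (hu : DiffTrans F D u)
    {P Q : MvPolynomial ℕ F} (hP : P.totalDegree ≤ 1) (hQ : Q.totalDegree ≤ 1)
    (hPQ : IsRelPrime P Q) {m : ℕ} (hm : max (ordU P) (ordU Q) = (m : WithBot ℕ))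
    {η : E} (hη : η * evalD F D u Q = evalD F D u P) {L : Polynomial E}
    (hL : ∀ k, L.coeff k = η * evalD F D u (pderiv k Q) - evalD F D u (pderiv k P)) :
    L.degree = (m : ℕ) := by
  have hL' : ∀ k, L.coeff k = η * algebraMap F E (coeff (Finsupp.single k 1) Q)
      - algebraMap F E (coeff (Finsupp.single k 1) P) := fun k => by
    rw [hL, pderiv_of_linear hP, pderiv_of_linear hQ]
    simp [evalD]
  have hbig : ∀ R : MvPolynomial ℕ F, ordU R ≤ (m : WithBot ℕ) → ∀ k, m < k → pderiv k R = 0 := by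
    intro R hR k hk
    apply pderiv_eq_zero_of_notMem_vars
    intro h1
    have h2 : k ≤ m := WithBot.coe_le_coe.1 ((Finset.le_max h1).trans hR)
    omega
  refine Polynomial.degree_eq_of_le_of_coeff_ne_zero ?_ ?_
  · rw [Polynomial.degree_le_iff_coeff_zero]
    intro k hk
    have hk' : m < k := by exact_mod_cast hk
    rw [hL, hbig P (hm ▸ le_max_left _ _) k hk', hbig Q (hm ▸ le_max_right _ _) k hk']
    simp
  · rw [hL']
    intro h
    set q := coeff (Finsupp.single m 1) Q with hq
    set p := coeff (Finsupp.single m 1) P with hp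
    have hq0 : q = 0 := by
      by_contra hq0
      refine notMem_range_of_coprime hu hPQ hm (p / q) ?_
      have hq1 : algebraMap F E q ≠ 0 := by simpa using hq0
      rw [← hη, map_div₀]
      congr 1
      rw [div_eq_iff hq1]
      exact (sub_eq_zero.1 h).symm
    have hp0 : p = 0 := by simpa [hq0] using h
    have hQv : m ∉ Q.vars := notMem_vars_of_pderiv_eq_zero (by
      rw [pderiv_of_linear hQ, ← hq, hq0, C_0])
    have hPv : m ∉ P.vars := notMem_vars_of_pderiv_eq_zero (by
      rw [pderiv_of_linear hP, ← hp, hp0, C_0])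
    rcases max_choice (ordU P) (ordU Q) with h1 | h1 <;> rw [h1] at hm
    · exact hPv (Finset.mem_of_max hm)
    · exact hQv (Finset.mem_of_max hm)

theorem aeval_deriv {ι : Type*} {δF : Derivation ℤ F F} {D : Derivation ℤ E E}
    (hD : ∀ a : F, D (algebraMap F E a) = algebraMap F E (δF a))
    {d : Derivation ℤ (MvPolynomial (ι × ℕ) F) (MvPolynomial (ι × ℕ) F)} (hd : IsDiffDer δF d)
    {v : ι × ℕ → E} (hv : ∀ i k, v (i, k + 1) = D (v (i, k))) (G : MvPolynomial (ι × ℕ) F) :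
    aeval v (d G) = D (aeval v G) := by
  induction G using MvPolynomial.induction_on with
  | C a => rw [hd.1, aeval_C, aeval_C, hD]
  | add p q hp hq => simp only [map_add, hp, hq]
  | mul_X p j hp =>
    obtain ⟨i, k⟩ := j
    simp only [Derivation.leibniz, smul_eq_mul, map_add, map_mul, hp, hd.2, aeval_X, hv]

theorem aeval_deriv_iterate {ι : Type*} {δF : Derivation ℤ F F} {D : Derivation ℤ E E}
    (hD : ∀ a : F, D (algebraMap F E a) = algebraMap F E (δF a))
    {d : Derivation ℤ (MvPolynomial (ι × ℕ) F) (MvPolynomial (ι × ℕ) F)} (hd : IsDiffDer δF d)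
    {v : ι × ℕ → E} (hv : ∀ i k, v (i, k + 1) = D (v (i, k))) (G : MvPolynomial (ι × ℕ) F)
    (n : ℕ) : aeval v (d^[n] G) = D^[n] (aeval v G) := by
  induction n with
  | zero => rfl
  | succ n ih => rw [Function.iterate_succ_apply', Function.iterate_succ_apply',
      aeval_deriv hD hd hv, ih]

/-- Passing from `G` to `dG` applies `twist D` to the coefficient vector of the `u_k`. -/
theorem coeff_twist_iterate {δF : Derivation ℤ F F} {D : Derivation ℤ E E}
    (hD : ∀ a : F, D (algebraMap F E a) = algebraMap F E (δF a))
    {d : Derivation ℤ (MvPolynomial (Fin 3 × ℕ) F) (MvPolynomial (Fin 3 × ℕ) F)}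
    (hd : IsDiffDer δF d) {v : Fin 3 × ℕ → E} (hv : ∀ i k, v (i, k + 1) = D (v (i, k)))
    {G : MvPolynomial (Fin 3 × ℕ) F} {L : Polynomial E}
    (hL : ∀ k, L.coeff k = aeval v (pderiv ((2 : Fin 3), k) G)) (n k : ℕ) :
    ((twist D)^[n] L).coeff k = aeval v (pderiv ((2 : Fin 3), k) (d^[n] G)) := by
  induction n generalizing k with
  | zero => exact hL k
  | succ n ih =>
    rw [Function.iterate_succ_apply', Function.iterate_succ_apply', twist_apply,
      Polynomial.coeff_add, coeff_coefD, ih]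
    cases k with
    | zero => rw [hd.pderiv_zero, aeval_deriv hD hd hv, Polynomial.coeff_X_mul_zero, add_zero]
    | succ k => rw [hd.pderiv_succ, map_add, aeval_deriv hD hd hv, Polynomial.coeff_X_mul, ih]

/-- A linear form on `M` vanishing on all members of an independent family but one. -/
theorem exists_dual {κ M : Type*} [AddCommGroup M] [Module E M] {ℓ : κ → M}
    (hℓ : LinearIndependent E ℓ) (j : κ) :
    ∃ φ : M →ₗ[E] E, φ (ℓ j) ≠ 0 ∧ ∀ i ≠ j, φ (ℓ i) = 0 := by
  obtain ⟨φ, h1, h2⟩ := Submodule.exists_le_ker_of_notMem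
    (hℓ.notMem_span_image (s := {j}ᶜ) (x := j) (by simp))
  exact ⟨φ, h1, fun i hi => h2 (Submodule.subset_span ⟨i, hi, rfl⟩)⟩

end Symbol

/-! ### The generic equations -/

section GenericEquations

variable {F : Type*} [Field F] {E : Type*} [Field E] [Algebra F E]

/-- The generic equation `x_0 Q - P` (for `i = 0`), resp. `y_0 Q - P` (for `i = 1`). -/
def genEq (i : Fin 2) (P Q : MvPolynomial ℕ F) : MvPolynomial (Fin 3 × ℕ) F :=
  X (i.castSucc, 0) * rename (fun k => ((2 : Fin 3), k)) Q - rename (fun k => ((2 : Fin 3), k)) P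

theorem extPt_castSucc {T : Type*} (v : Fin 2 × ℕ → T) (U : ℕ → T) (i : Fin 2) (k : ℕ) :
    extPt v U (i.castSucc, k) = v (i, k) := by
  have : ((i.castSucc : Fin 3) : ℕ) < 2 := i.2
  simp only [extPt, dif_pos this]
  rfl

theorem extPt_succ {D : Derivation ℤ E E} {v : Fin 2 × ℕ → E} {U : ℕ → E}
    (hv : ∀ i k, v (i, k + 1) = D (v (i, k))) (hU : ∀ k, U (k + 1) = D (U k)) (i : Fin 3) (k : ℕ) :
    extPt v U (i, k + 1) = D (extPt v U (i, k)) := by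
  simp only [extPt]
  split_ifs
  · exact hv _ _
  · exact hU _

theorem aeval_genEq (v : Fin 2 × ℕ → E) (U : ℕ → E) (i : Fin 2) (P Q : MvPolynomial ℕ F) :
    aeval (extPt v U) (genEq i P Q) = v (i, 0) * aeval U Q - aeval U P := by
  rw [genEq, map_sub, map_mul, aeval_rename_u, aeval_rename_u, aeval_X, extPt_castSucc]

theorem aeval_pderiv_genEq (v : Fin 2 × ℕ → E) (U : ℕ → E) (i : Fin 2) (P Q : MvPolynomial ℕ F)
    (k : ℕ) : aeval (extPt v U) (pderiv ((2 : Fin 3), k) (genEq i P Q))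
      = v (i, 0) * aeval U (pderiv k Q) - aeval U (pderiv k P) := by
  have hinj : Function.Injective fun k : ℕ => ((2 : Fin 3), k) := fun a b h => (Prod.ext_iff.1 h).2
  have hne : ((i.castSucc : Fin 3), 0) ≠ ((2 : Fin 3), k) := fun h => by
    have h1 := congrArg Fin.val (Prod.ext_iff.1 h).1
    have := i.2
    simp at h1
    omega
  have h1 : ∀ R : MvPolynomial ℕ F, pderiv ((2 : Fin 3), k) (rename (fun k => ((2 : Fin 3), k)) R)
      = rename (fun k => ((2 : Fin 3), k)) (pderiv k R) := fun R => pderiv_rename hinj k R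
  rw [genEq, map_sub, pderiv_mul, pderiv_X_of_ne hne, zero_mul, zero_add, h1, h1, map_sub, map_mul,
    aeval_rename_u, aeval_rename_u, aeval_X, extPt_castSucc]

/-- Moving the coordinate `x_n` by `1` changes the value of `dⁿ(x_0 Q - P)` by `Q(u)`. -/
theorem aeval_genEq_update [CharZero F] {δF : Derivation ℤ F F}
    {d : Derivation ℤ (MvPolynomial (Fin 3 × ℕ) F) (MvPolynomial (Fin 3 × ℕ) F)}
    (hd : IsDiffDer δF d) (v : Fin 2 × ℕ → E) (U : ℕ → E) (i : Fin 2) (P Q : MvPolynomial ℕ F)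
    (n : ℕ) :
    aeval (extPt (Function.update v (i, n) (v (i, n) + 1)) U) (d^[n] (genEq i P Q))
      = aeval (extPt v U) (d^[n] (genEq i P Q)) + aeval U Q := by
  classical
  have hne : (i.castSucc : Fin 3) ≠ 2 := fun h => by
    have h1 := congrArg Fin.val h
    have := i.2
    simp at h1
    omega
  have hren : ∀ (R : MvPolynomial ℕ F) l,
      (i.castSucc, l) ∉ (rename (fun k => ((2 : Fin 3), k)) R).vars := by
    intro R l h
    have := vars_rename _ _ h
    simp only [Finset.mem_image, Prod.mk.injEq] at this
    obtain ⟨_, _, h1, _⟩ := this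
    exact hne h1.symm
  have hp : ∀ l, pderiv (i.castSucc, l) (genEq i P Q)
      = if l = 0 then rename (fun k => ((2 : Fin 3), k)) Q else 0 := by
    intro l
    rw [genEq, map_sub, pderiv_mul, pderiv_eq_zero_of_notMem_vars (hren P l),
      pderiv_eq_zero_of_notMem_vars (hren Q l), pderiv_X, Pi.single_apply]
    by_cases hl : l = 0
    · simp [hl]
    · simp [hl, Ne.symm hl]
  have h1 := (hd.pderiv_iterate i.castSucc 0
    (fun l hl => by rw [hp, if_neg (by omega)]) n).2
  rw [zero_add, hp, if_pos rfl] at h1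
  set G := d^[n] (genEq i P Q)
  set T := G - X (i.castSucc, n) * rename (fun k => ((2 : Fin 3), k)) Q with hT
  have hTv : (i.castSucc, n) ∉ T.vars := by
    apply notMem_vars_of_pderiv_eq_zero
    rw [hT, map_sub, h1, pderiv_mul, pderiv_X_self, pderiv_eq_zero_of_notMem_vars (hren Q n)]
    simp
  have hG : G = T + X (i.castSucc, n) * rename (fun k => ((2 : Fin 3), k)) Q := by
    rw [hT]; ring
  have h2 : aeval (extPt (Function.update v (i, n) (v (i, n) + 1)) U) T
      = aeval (extPt v U) T := by
    refine aeval_eq_of_vars fun p hpT => ?_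
    simp only [extPt]
    split_ifs with h3
    · refine Function.update_of_ne (fun h4 => hTv ?_) _ _
      have h5 : p = (i.castSucc, n) := by
        obtain ⟨h6, h7⟩ := Prod.ext_iff.1 h4
        have h8 : (p.1 : ℕ) = (i : ℕ) := congrArg Fin.val h6
        exact Prod.ext (Fin.ext h8) h7
      rwa [← h5]
    · rfl
  rw [hG, map_add, map_add, h2, map_mul, map_mul, aeval_X, aeval_X, extPt_castSucc,
    extPt_castSucc, aeval_rename_u, aeval_rename_u, Function.update_self]
  ring

theorem aeval_linSpan_congr {i : Fin 2} {n : ℕ} {v v' : Fin 2 × ℕ → E}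
    (h : ∀ l ≤ n, v (i, l) = v' (i, l)) {z : MvPolynomial (Fin 2 × ℕ) F}
    (hz : z ∈ linSpan F i n) : aeval v z = aeval v' z := by
  refine aeval_eq_of_vars fun p hp => ?_
  have h1 := degreeOf_linSpan i n hz p
  have h2 := mem_vars_iff_degreeOf_ne_zero.1 hp
  split_ifs at h1 with h3
  · obtain ⟨j, l⟩ := p
    obtain ⟨rfl, h4⟩ := h3
    exact h l h4
  · omega

theorem IsRow.aeval_congr {i : Fin 2} {n k : ℕ} {v v' : Fin 2 × ℕ → E} (U : ℕ → E)
    (h : ∀ l ≤ n, v (i, l) = v' (i, l)) {G : MvPolynomial (Fin 3 × ℕ) F}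
    (hG : IsRow (linSpan F i n) k G) :
    aeval (extPt v U) G = aeval (extPt v' U) G ∧
      ∀ j, aeval (extPt v U) (pderiv ((2 : Fin 3), j) G)
        = aeval (extPt v' U) (pderiv ((2 : Fin 3), j) G) := by
  refine ⟨?_, fun j => ?_⟩
  · rw [← hG.aeval_eq v U le_rfl, ← hG.aeval_eq v' U le_rfl,
      aeval_linSpan_congr h hG.projXY_mem]
    congr 1
    exact Finset.sum_congr rfl fun j _ => by rw [aeval_linSpan_congr h (hG.projXY_pderiv_mem j)]
  · rw [← hG.aeval_pderiv, ← hG.aeval_pderiv, aeval_linSpan_congr h (hG.projXY_pderiv_mem j)]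

/-- Differentiating `η Q(u) = P(u)`. -/
theorem coeff_symbol_frac {D : Derivation ℤ E E} {u : E} {Δ : Derivation F E (Polynomial E)}
    (hX : ∀ k, Δ (D^[k] u) = Polynomial.X ^ k) {P Q : MvPolynomial ℕ F} {η : E}
    (hη : η * evalD F D u Q = evalD F D u P) (k : ℕ) :
    (-(evalD F D u Q) • Δ η).coeff k
      = η * evalD F D u (pderiv k Q) - evalD F D u (pderiv k P) := by
  have h1 : (Δ (η * evalD F D u Q)).coeff k = evalD F D u (pderiv k P) := by
    rw [hη, coeff_symbol_aeval hX]
  rw [Derivation.leibniz, Polynomial.coeff_add, Polynomial.coeff_smul, Polynomial.coeff_smul,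
    coeff_symbol_aeval hX, smul_eq_mul, smul_eq_mul] at h1
  rw [Polynomial.coeff_smul, smul_eq_mul, ← h1]
  ring

/-- A relation `A(η) = 0` of order `s` in `x`, with nonvanishing separant, expresses the symbol of
`η₁⁽ˢ⁾` through those of lower order and of the `η₂⁽ʲ⁾`; this bounds `s` from below. -/
theorem le_of_separant_ne_zero (Δ : Derivation F E (Polynomial E)) {v : Fin 2 × ℕ → E} {m : ℕ}
    (hli : LinearIndependent E
      (Sum.elim (fun j : ℕ => Δ (v (1, j))) (fun i : Fin m => Δ (v (0, (i : ℕ))))))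
    {A : MvPolynomial (Fin 2 × ℕ) F} {s : ℕ} (hs : ∀ l, s < l → ((0 : Fin 2), l) ∉ A.vars)
    (hA : aeval v A = 0) (hS : aeval v (pderiv ((0 : Fin 2), s) A) ≠ 0) : m ≤ s := by
  by_contra hlt
  obtain ⟨φ, h1, h2⟩ := exists_dual hli (Sum.inr ⟨s, not_le.1 hlt⟩)
  have h3 := deriv_aeval (φ.compDer Δ) v (0, s) A (fun q hq hqs => ?_)
  · rw [hA, map_zero] at h3
    exact mul_ne_zero hS h1 h3.symm
  · obtain ⟨i, l⟩ := q
    fin_cases i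
    · have hl : l < s := by
        rcases lt_trichotomy l s with h | h | h
        · exact h
        · exact absurd (by rw [h]; rfl) hqs
        · exact absurd hq (hs l h)
      refine h2 (Sum.inr ⟨l, by omega⟩) (fun h => ?_)
      simp at h
      omega
    · exact h2 (Sum.inl l) (by simp)

end GenericEquations

/-! ### The differential resultant near the generic point -/

section Resultant

variable {F : Type*} [Field F]

/-- The rows of the resultant matrix are affine in the `u_k`, with coefficients in the span of `1`
and of the derivatives of a single indeterminate. -/
theorem isRow_resRow {δF : Derivation ℤ F F}
    {d : Derivation ℤ (MvPolynomial (Fin 2 × ℕ) F) (MvPolynomial (Fin 2 × ℕ) F)}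
    {d' : Derivation ℤ (MvPolynomial (Fin 3 × ℕ) F) (MvPolynomial (Fin 3 × ℕ) F)}
    (hd : IsDiffDer δF d) (hd' : IsDiffDer δF d') {P₁ Q₁ P₂ Q₂ : MvPolynomial ℕ F}
    (hP₁ : P₁.totalDegree ≤ 1) (hQ₁ : Q₁.totalDegree ≤ 1)
    (hP₂ : P₂.totalDegree ≤ 1) (hQ₂ : Q₂.totalDegree ≤ 1) {m₁ m₂ : ℕ}
    (hm₁ : max (ordU P₁) (ordU Q₁) = (m₁ : WithBot ℕ))
    (hm₂ : max (ordU P₂) (ordU Q₂) = (m₂ : WithBot ℕ)) (i : ℕ) :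
    IsRow (if i ≤ m₂ then linSpan F 0 (m₂ - i) else linSpan F 1 (m₁ + m₂ + 1 - i))
      (if i ≤ m₂ then m₁ + 1 + (m₂ - i) else m₂ + 1 + (m₁ + m₂ + 1 - i))
      (resRow F d' P₁ Q₁ P₂ Q₂ m₁ m₂ i) := by
  simp only [resRow]
  split_ifs
  · exact isRow_iterate hd hd' 0 (isRow_base 0 hP₁ hQ₁ hm₁) _
  · exact isRow_iterate hd hd' 1 (isRow_base 1 hP₂ hQ₂ hm₂) _

theorem deltaRes_eq (d' : Derivation ℤ (MvPolynomial (Fin 3 × ℕ) F) (MvPolynomial (Fin 3 × ℕ) F))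
    (P₁ Q₁ P₂ Q₂ : MvPolynomial ℕ F) (m₁ m₂ : ℕ) :
    deltaRes F d' P₁ Q₁ P₂ Q₂ m₁ m₂
      = (coeffMat (m₁ + m₂) (fun i => resRow F d' P₁ Q₁ P₂ Q₂ m₁ m₂ (i : ℕ))).det := rfl

/-- The resultant has degree at most `1` in `x_{m₂}`, and order at most `m₂` in `x`. -/
theorem degreeOf_deltaRes_x {δF : Derivation ℤ F F}
    {d : Derivation ℤ (MvPolynomial (Fin 2 × ℕ) F) (MvPolynomial (Fin 2 × ℕ) F)}
    {d' : Derivation ℤ (MvPolynomial (Fin 3 × ℕ) F) (MvPolynomial (Fin 3 × ℕ) F)}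
    (hd : IsDiffDer δF d) (hd' : IsDiffDer δF d') {P₁ Q₁ P₂ Q₂ : MvPolynomial ℕ F}
    (hP₁ : P₁.totalDegree ≤ 1) (hQ₁ : Q₁.totalDegree ≤ 1)
    (hP₂ : P₂.totalDegree ≤ 1) (hQ₂ : Q₂.totalDegree ≤ 1) {m₁ m₂ : ℕ}
    (hm₁ : max (ordU P₁) (ordU Q₁) = (m₁ : WithBot ℕ))
    (hm₂ : max (ordU P₂) (ordU Q₂) = (m₂ : WithBot ℕ)) (l : ℕ) (hl : m₂ ≤ l) :
    degreeOf ((0 : Fin 2), l) (deltaRes F d' P₁ Q₁ P₂ Q₂ m₁ m₂) ≤ if l = m₂ then 1 else 0 := by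
  have hrow := isRow_resRow hd hd' hP₁ hQ₁ hP₂ hQ₂ hm₁ hm₂
  rw [deltaRes_eq]
  refine (degreeOf_det_le _ _ (fun i => if i = 0 then (if l = m₂ then 1 else 0) else 0)
    fun i j => ?_).trans (by simp)
  have key : ∀ z ∈ (if (i : ℕ) ≤ m₂ then linSpan F 0 (m₂ - i) else linSpan F 1 (m₁ + m₂ + 1 - i)),
      degreeOf ((0 : Fin 2), l) z ≤ if i = 0 then (if l = m₂ then 1 else 0) else 0 := by
    intro z hz
    have hi : i = 0 ↔ (i : ℕ) = 0 := Fin.ext_iff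
    split_ifs at hz with h
    · refine (degreeOf_linSpan _ _ hz _).trans ?_
      simp only [hi, true_and]
      split_ifs <;> omega
    · refine (degreeOf_linSpan _ _ hz _).trans ?_
      simp
  rw [coeffMat, Matrix.of_apply]
  by_cases hj : (j : ℕ) ≤ m₁ + m₂
  · rw [if_pos hj]
    exact key _ ((hrow i).projXY_pderiv_mem _)
  · rw [if_neg hj]
    exact key _ (hrow i).projXY_mem

/-- The resultant has degree at most `1` in `y_{m₁}`, and order at most `m₁` in `y`. -/
theorem degreeOf_deltaRes_y {δF : Derivation ℤ F F}
    {d : Derivation ℤ (MvPolynomial (Fin 2 × ℕ) F) (MvPolynomial (Fin 2 × ℕ) F)}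
    {d' : Derivation ℤ (MvPolynomial (Fin 3 × ℕ) F) (MvPolynomial (Fin 3 × ℕ) F)}
    (hd : IsDiffDer δF d) (hd' : IsDiffDer δF d') {P₁ Q₁ P₂ Q₂ : MvPolynomial ℕ F}
    (hP₁ : P₁.totalDegree ≤ 1) (hQ₁ : Q₁.totalDegree ≤ 1)
    (hP₂ : P₂.totalDegree ≤ 1) (hQ₂ : Q₂.totalDegree ≤ 1) {m₁ m₂ : ℕ}
    (hm₁ : max (ordU P₁) (ordU Q₁) = (m₁ : WithBot ℕ))
    (hm₂ : max (ordU P₂) (ordU Q₂) = (m₂ : WithBot ℕ)) (l : ℕ) (hl : m₁ ≤ l) :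
    degreeOf ((1 : Fin 2), l) (deltaRes F d' P₁ Q₁ P₂ Q₂ m₁ m₂) ≤ if l = m₁ then 1 else 0 := by
  have hrow := isRow_resRow hd hd' hP₁ hQ₁ hP₂ hQ₂ hm₁ hm₂
  rw [deltaRes_eq]
  refine (degreeOf_det_le _ _ (fun i => if i = (⟨m₂ + 1, by omega⟩ : Fin (m₁ + m₂ + 2)) then
    (if l = m₁ then 1 else 0) else 0) fun i j => ?_).trans (by simp)
  have key : ∀ z ∈ (if (i : ℕ) ≤ m₂ then linSpan F 0 (m₂ - i) else linSpan F 1 (m₁ + m₂ + 1 - i)),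
      degreeOf ((1 : Fin 2), l) z ≤ if i = (⟨m₂ + 1, by omega⟩ : Fin (m₁ + m₂ + 2)) then
        (if l = m₁ then 1 else 0) else 0 := by
    intro z hz
    have hi : i = (⟨m₂ + 1, by omega⟩ : Fin (m₁ + m₂ + 2)) ↔ (i : ℕ) = m₂ + 1 := Fin.ext_iff
    split_ifs at hz with h
    · refine (degreeOf_linSpan _ _ hz _).trans ?_
      simp
    · refine (degreeOf_linSpan _ _ hz _).trans ?_
      have := i.2
      simp only [hi, true_and]
      split_ifs <;> omega
  rw [coeffMat, Matrix.of_apply]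
  by_cases hj : (j : ℕ) ≤ m₁ + m₂
  · rw [if_pos hj]
    exact key _ ((hrow i).projXY_pderiv_mem _)
  · rw [if_neg hj]
    exact key _ (hrow i).projXY_mem

variable {E : Type*} [Field E] [Algebra F E]

section

variable {δF : Derivation ℤ F F} {D : Derivation ℤ E E}
    {d : Derivation ℤ (MvPolynomial (Fin 2 × ℕ) F) (MvPolynomial (Fin 2 × ℕ) F)}
    {d' : Derivation ℤ (MvPolynomial (Fin 3 × ℕ) F) (MvPolynomial (Fin 3 × ℕ) F)}
    {P₁ Q₁ P₂ Q₂ : MvPolynomial ℕ F} {m₁ m₂ : ℕ} {v : Fin 2 × ℕ → E} {U : ℕ → E}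

theorem aeval_iterate_genEq (hD : ∀ a : F, D (algebraMap F E a) = algebraMap F E (δF a))
    (hd' : IsDiffDer δF d') (hv : ∀ i k, v (i, k + 1) = D (v (i, k)))
    (hU : ∀ k, U (k + 1) = D (U k)) {i : Fin 2} {P Q : MvPolynomial ℕ F}
    (h : v (i, 0) * aeval U Q = aeval U P) (n : ℕ) :
    aeval (extPt v U) (d'^[n] (genEq i P Q)) = 0 := by
  rw [aeval_deriv_iterate hD hd' (extPt_succ hv hU), aeval_genEq, h, sub_self]
  exact iterate_map_zero D n

/-- The resultant vanishes at a point admitting a common solution `U` of the system. -/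
theorem aeval_deltaRes (hD : ∀ a : F, D (algebraMap F E a) = algebraMap F E (δF a))
    (hd : IsDiffDer δF d) (hd' : IsDiffDer δF d')
    (hP₁ : P₁.totalDegree ≤ 1) (hQ₁ : Q₁.totalDegree ≤ 1)
    (hP₂ : P₂.totalDegree ≤ 1) (hQ₂ : Q₂.totalDegree ≤ 1)
    (hm₁ : max (ordU P₁) (ordU Q₁) = (m₁ : WithBot ℕ))
    (hm₂ : max (ordU P₂) (ordU Q₂) = (m₂ : WithBot ℕ))
    (hv : ∀ i k, v (i, k + 1) = D (v (i, k))) (hU : ∀ k, U (k + 1) = D (U k))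
    (h₁ : v (0, 0) * aeval U Q₁ = aeval U P₁) (h₂ : v (1, 0) * aeval U Q₂ = aeval U P₂) :
    aeval v (deltaRes F d' P₁ Q₁ P₂ Q₂ m₁ m₂) = 0 := by
  rw [deltaRes_eq]
  refine aeval_det_eq_zero (fun i => ?_)
    (fun i => isRow_resRow hd hd' hP₁ hQ₁ hP₂ hQ₂ hm₁ hm₂ i) v U fun i => ?_
  · have := i.2
    split_ifs <;> omega
  · simp only [resRow]
    split_ifs
    · exact aeval_iterate_genEq hD hd' hv hU (i := 0) h₁ _
    · exact aeval_iterate_genEq hD hd' hv hU (i := 1) h₂ _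

/-- After moving `x_{m₂}` alone, the first row of the matrix is the only one which does not
vanish at `(U, 1)`, so that the resultant does not vanish. -/
theorem aeval_deltaRes_update_x [CharZero F]
    (hD : ∀ a : F, D (algebraMap F E a) = algebraMap F E (δF a))
    (hd : IsDiffDer δF d) (hd' : IsDiffDer δF d')
    (hP₁ : P₁.totalDegree ≤ 1) (hQ₁ : Q₁.totalDegree ≤ 1)
    (hP₂ : P₂.totalDegree ≤ 1) (hQ₂ : Q₂.totalDegree ≤ 1)
    (hm₁ : max (ordU P₁) (ordU Q₁) = (m₁ : WithBot ℕ))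
    (hm₂ : max (ordU P₂) (ordU Q₂) = (m₂ : WithBot ℕ))
    (hv : ∀ i k, v (i, k + 1) = D (v (i, k))) (hU : ∀ k, U (k + 1) = D (U k))
    (h₁ : v (0, 0) * aeval U Q₁ = aeval U P₁) (h₂ : v (1, 0) * aeval U Q₂ = aeval U P₂)
    (hQU : aeval U Q₁ ≠ 0) {L₁ L₂ : Polynomial E}
    (hL₁ : ∀ k, L₁.coeff k = v (0, 0) * aeval U (pderiv k Q₁) - aeval U (pderiv k P₁))
    (hL₂ : ∀ k, L₂.coeff k = v (1, 0) * aeval U (pderiv k Q₂) - aeval U (pderiv k P₂))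
    (hli : LinearIndependent E (Sum.elim (fun j : ℕ => (twist D)^[j] L₂)
      (fun i : Fin m₂ => (twist D)^[(i : ℕ)] L₁))) :
    aeval (Function.update v (0, m₂) (v (0, m₂) + 1)) (deltaRes F d' P₁ Q₁ P₂ Q₂ m₁ m₂) ≠ 0 := by
  have hv3 := extPt_succ hv hU
  have hc₁ := coeff_twist_iterate hD hd' hv3 (G := genEq 0 P₁ Q₁) (L := L₁)
    (fun k => by rw [hL₁, aeval_pderiv_genEq])
  have hc₂ := coeff_twist_iterate hD hd' hv3 (G := genEq 1 P₂ Q₂) (L := L₂)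
    (fun k => by rw [hL₂, aeval_pderiv_genEq])
  have hr₁ : ∀ i, i ≠ 0 → i ≤ m₂ → _ := fun i h0 hi => IsRow.aeval_congr U (v := v)
    (v' := Function.update v (0, m₂) (v (0, m₂) + 1))
    (fun l hl => (Function.update_of_ne (fun h => by simp at h; omega) _ _).symm)
    (isRow_iterate hd hd' 0 (isRow_base 0 hP₁ hQ₁ hm₁) (m₂ - i))
  have hr₂ := fun n => IsRow.aeval_congr U (v := v)
    (v' := Function.update v (0, m₂) (v (0, m₂) + 1))
    (fun l hl => (Function.update_of_ne (fun h => by simp at h) _ _).symm)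
    (isRow_iterate hd hd' 1 (isRow_base 1 hP₂ hQ₂ hm₂) n)
  rw [deltaRes_eq]
  -- row `i` is the coefficient vector of `X^(m₂-i) L₁` for `i ≤ m₂`, of `X^(m₁+m₂+1-i) L₂` otherwise
  refine aeval_det_ne_zero (fun i => ?_)
    (fun i => isRow_resRow hd hd' hP₁ hQ₁ hP₂ hQ₂ hm₁ hm₂ i) _ U 0 ?_ (fun i hi => ?_) hli
    (fun i => if h : ((i : Fin (m₁ + m₂ + 2)) : ℕ) ≤ m₂ then
      Sum.inr ⟨m₂ - (i : Fin (m₁ + m₂ + 2)), by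
        have h0 : ((i : Fin (m₁ + m₂ + 2)) : ℕ) ≠ 0 := fun h' => i.2 (Fin.ext h')
        omega⟩
      else Sum.inl (m₁ + m₂ + 1 - (i : Fin (m₁ + m₂ + 2)))) (fun i j hij => ?_) (fun i k => ?_)
  · have := i.2
    split_ifs <;> omega
  · have h := aeval_genEq_update hd' v U 0 P₁ Q₁ m₂
    rw [aeval_iterate_genEq hD hd' hv hU (i := 0) h₁, zero_add] at h
    rw [← h] at hQU
    exact hQU
  · have hi' : (i : ℕ) ≠ 0 := fun h' => hi (Fin.ext h')
    simp only [resRow]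
    split_ifs with h
    · exact (hr₁ i hi' h).1.symm.trans (aeval_iterate_genEq hD hd' hv hU (i := 0) h₁ _)
    · exact (hr₂ _).1.symm.trans (aeval_iterate_genEq hD hd' hv hU (i := 1) h₂ _)
  · have hi := i.1.2
    have hj := j.1.2
    apply Subtype.ext
    apply Fin.ext
    dsimp only at hij
    split_ifs at hij
    · have := congrArg Fin.val (Sum.inr_injective hij)
      dsimp only at this
      omega
    · have := Sum.inl_injective hij
      omega
  · have hi' : ((i : Fin (m₁ + m₂ + 2)) : ℕ) ≠ 0 := fun h' => i.2 (Fin.ext h')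
    simp only [resRow]
    split_ifs with h
    · exact (hc₁ _ k).trans ((hr₁ _ hi' h).2 k)
    · exact (hc₂ _ k).trans ((hr₂ _).2 k)

/-- The counterpart of `aeval_deltaRes_update_x` for `y_{m₁}`, which occurs in the row of
`d^{m₁}f₂` only. -/
theorem aeval_deltaRes_update_y [CharZero F]
    (hD : ∀ a : F, D (algebraMap F E a) = algebraMap F E (δF a))
    (hd : IsDiffDer δF d) (hd' : IsDiffDer δF d')
    (hP₁ : P₁.totalDegree ≤ 1) (hQ₁ : Q₁.totalDegree ≤ 1)
    (hP₂ : P₂.totalDegree ≤ 1) (hQ₂ : Q₂.totalDegree ≤ 1)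
    (hm₁ : max (ordU P₁) (ordU Q₁) = (m₁ : WithBot ℕ))
    (hm₂ : max (ordU P₂) (ordU Q₂) = (m₂ : WithBot ℕ))
    (hv : ∀ i k, v (i, k + 1) = D (v (i, k))) (hU : ∀ k, U (k + 1) = D (U k))
    (h₁ : v (0, 0) * aeval U Q₁ = aeval U P₁) (h₂ : v (1, 0) * aeval U Q₂ = aeval U P₂)
    (hQU : aeval U Q₂ ≠ 0) {L₁ L₂ : Polynomial E}
    (hL₁ : ∀ k, L₁.coeff k = v (0, 0) * aeval U (pderiv k Q₁) - aeval U (pderiv k P₁))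
    (hL₂ : ∀ k, L₂.coeff k = v (1, 0) * aeval U (pderiv k Q₂) - aeval U (pderiv k P₂))
    (hli : LinearIndependent E (Sum.elim (fun j : ℕ => (twist D)^[j] L₁)
      (fun i : Fin m₁ => (twist D)^[(i : ℕ)] L₂))) :
    aeval (Function.update v (1, m₁) (v (1, m₁) + 1)) (deltaRes F d' P₁ Q₁ P₂ Q₂ m₁ m₂) ≠ 0 := by
  have hv3 := extPt_succ hv hU
  have hc₁ := coeff_twist_iterate hD hd' hv3 (G := genEq 0 P₁ Q₁) (L := L₁)
    (fun k => by rw [hL₁, aeval_pderiv_genEq])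
  have hc₂ := coeff_twist_iterate hD hd' hv3 (G := genEq 1 P₂ Q₂) (L := L₂)
    (fun k => by rw [hL₂, aeval_pderiv_genEq])
  have hr₁ := fun n => IsRow.aeval_congr U (v := v)
    (v' := Function.update v (1, m₁) (v (1, m₁) + 1))
    (fun l hl => (Function.update_of_ne (fun h => by simp at h) _ _).symm)
    (isRow_iterate hd hd' 0 (isRow_base 0 hP₁ hQ₁ hm₁) n)
  have hr₂ : ∀ n, n < m₁ → _ := fun n hn => IsRow.aeval_congr U (v := v)
    (v' := Function.update v (1, m₁) (v (1, m₁) + 1))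
    (fun l hl => (Function.update_of_ne (fun h => by simp at h; omega) _ _).symm)
    (isRow_iterate hd hd' 1 (isRow_base 1 hP₂ hQ₂ hm₂) n)
  let r : Fin (m₁ + m₂ + 2) := ⟨m₂ + 1, by omega⟩
  have hlt : ∀ i : Fin (m₁ + m₂ + 2), i ≠ r → ¬ (i : ℕ) ≤ m₂ → m₁ + m₂ + 1 - (i : ℕ) < m₁ := by
    intro i hi h
    have h0 : (i : ℕ) ≠ m₂ + 1 := fun h' => hi (Fin.ext h')
    have := i.2
    omega
  rw [deltaRes_eq]
  -- row `i` is the coefficient vector of `X^(m₂-i) L₁` for `i ≤ m₂`, of `X^(m₁+m₂+1-i) L₂` otherwise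
  refine aeval_det_ne_zero (fun i => ?_)
    (fun i => isRow_resRow hd hd' hP₁ hQ₁ hP₂ hQ₂ hm₁ hm₂ i) _ U r ?_ (fun i hi => ?_) hli
    (fun i => if h : ((i : Fin (m₁ + m₂ + 2)) : ℕ) ≤ m₂ then
      Sum.inl (m₂ - (i : Fin (m₁ + m₂ + 2)))
      else Sum.inr ⟨m₁ + m₂ + 1 - (i : Fin (m₁ + m₂ + 2)), hlt i.1 i.2 h⟩)
    (fun i j hij => ?_) (fun i k => ?_)
  · have := i.2
    split_ifs <;> omega
  · have h := aeval_genEq_update hd' v U 1 P₂ Q₂ m₁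
    rw [aeval_iterate_genEq hD hd' hv hU (i := 1) h₂, zero_add] at h
    rw [← h] at hQU
    have hr1 : ¬ (r : ℕ) ≤ m₂ := by simp [r]
    have hr2 : m₁ + m₂ + 1 - (r : ℕ) = m₁ := by simp only [r]; omega
    simp only [resRow, if_neg hr1, hr2]
    exact hQU
  · simp only [resRow]
    split_ifs with h
    · exact (hr₁ _).1.symm.trans (aeval_iterate_genEq hD hd' hv hU (i := 0) h₁ _)
    · exact (hr₂ _ (hlt i hi h)).1.symm.trans (aeval_iterate_genEq hD hd' hv hU (i := 1) h₂ _)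
  · have hi := i.1.2
    have hj := j.1.2
    apply Subtype.ext
    apply Fin.ext
    dsimp only at hij
    split_ifs at hij
    · have := Sum.inl_injective hij
      omega
    · have := congrArg Fin.val (Sum.inr_injective hij)
      dsimp only at this
      omega
  · simp only [resRow]
    split_ifs with h
    · exact (hc₁ _ k).trans ((hr₁ _).2 k)
    · exact (hc₂ _ k).trans ((hr₂ _ (hlt i.1 i.2 h)).2 k)

end

end Resultant

/-! ### Orders and divisibility -/

section Order

variable {F : Type*} [Field F]

theorem le_ordXY_of_mem {f : MvPolynomial (Fin 2 × ℕ) F} {i : Fin 2} {l : ℕ}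
    (h : (i, l) ∈ f.vars) : (l : WithBot ℕ) ≤ ordXY f := by
  have h1 : (l : WithBot ℕ) ≤ ordIdx i f := Finset.le_max (by simpa using h)
  refine h1.trans ?_
  fin_cases i
  · exact le_max_left _ _
  · exact le_max_right _ _

theorem ordIdx_lt {f : MvPolynomial (Fin 2 × ℕ) F} {i : Fin 2} {m : ℕ}
    (h : ∀ l, m ≤ l → (i, l) ∉ f.vars) : ordIdx i f < (m : WithBot ℕ) := by
  cases h1 : ordIdx i f with
  | bot => exact WithBot.bot_lt_coe m
  | coe s => exact WithBot.coe_lt_coe.2 (not_le.1 fun h2 => h s h2 (ordIdx_eq_coe h1).1)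

end Order

section Divisibility

variable {F : Type*} [Field F] {E : Type*} [Field E] [Algebra F E]

theorem aeval_update_of_notMem {v : Fin 2 × ℕ → E} {p : Fin 2 × ℕ} (a : E)
    {f : MvPolynomial (Fin 2 × ℕ) F} (h : p ∉ f.vars) :
    aeval (Function.update v p a) f = aeval v f :=
  aeval_eq_of_vars fun q hq => Function.update_of_ne (fun h1 : q = p => h (h1 ▸ hq)) _ _

/-- A polynomial `R` of order at most `m` in `x` and vanishing on the curve is divisible by `A`,
when the symbols of `η₁, …, η₁⁽ᵐ⁻¹⁾` are independent modulo those of the `η₂⁽ʲ⁾`. The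
nonvanishing of `R` at a point differing from the generic one in `x_m` excludes the case where
`x` does not occur in `A`. -/
theorem dvd_of_generic [CharZero F] {δF : Derivation ℤ F F} {D : Derivation ℤ E E}
    (hD : ∀ a : F, D (algebraMap F E a) = algebraMap F E (δF a))
    {d : Derivation ℤ (MvPolynomial (Fin 2 × ℕ) F) (MvPolynomial (Fin 2 × ℕ) F)}
    (hd : IsDiffDer δF d) {A : MvPolynomial (Fin 2 × ℕ) F} (hA : Irreducible A)
    {v : Fin 2 × ℕ → E} (hv : ∀ i k, v (i, k + 1) = D (v (i, k)))
    (hsat : ∀ f, aeval v f = 0 ↔ f ∈ satSet d A) (hAv : aeval v A = 0)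
    (Δ : Derivation F E (Polynomial E)) {m : ℕ} (hli : LinearIndependent E
      (Sum.elim (fun j : ℕ => Δ (v (1, j))) (fun i : Fin m => Δ (v (0, (i : ℕ))))))
    {R : MvPolynomial (Fin 2 × ℕ) F} (hR : aeval v R = 0)
    (hRm : ∀ l, m < l → ((0 : Fin 2), l) ∉ R.vars) {a : E}
    (hRa : aeval (Function.update v (0, m) a) R ≠ 0) : A ∣ R := by
  have hRsat := (hsat R).1 hR
  cases hs : ordIdx 0 A with
  | bot =>
    exfalso
    obtain ⟨n, hn⟩ := hRsat
    have hsep : sepX A = 1 := by rw [sepX, hs]; rfl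
    rw [hsep, one_pow, one_mul] at hn
    have h1 : diffIdeal d A ≤ RingHom.ker (aeval (Function.update v (0, m) a) :
        MvPolynomial (Fin 2 × ℕ) F →ₐ[F] E) := by
      refine Ideal.span_le.2 ?_
      rintro _ ⟨k, rfl⟩
      change aeval _ (d^[k] A) = 0
      rw [aeval_update_of_notMem, aeval_deriv_iterate hD hd hv, hAv]
      · exact iterate_map_zero D k
      · exact notMem_vars_of_pderiv_eq_zero (hd.pderiv_iterate_eq_zero 0
          (fun l => pderiv_eq_zero_of_notMem_vars (ordIdx_eq_bot hs l)) k m)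
    exact hRa (h1 hn)
  | coe s =>
    obtain ⟨hsA, hsA'⟩ := ordIdx_eq_coe hs
    have hS : aeval v (pderiv ((0 : Fin 2), s) A) ≠ 0 := fun h =>
      not_dvd_pderiv hsA (dvd_of_mem_sat hd hA hs
        (fun l hl => notMem_vars_pderiv (hsA' l hl)) ((hsat _).1 h))
    have hms := le_of_separant_ne_zero Δ hli hsA' hAv hS
    exact dvd_of_mem_sat hd hA hs (fun l hl => hRm l (by omega)) hRsat

/-- A divisor `A` of `R` with `A(v) = 0` carries every variable `p` in which `R` has degree at most
`1` and by moving which `R` can be made nonzero. -/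
theorem degreeOf_eq_one {A B : MvPolynomial (Fin 2 × ℕ) F} {v : Fin 2 × ℕ → E}
    (hAv : aeval v A = 0) (hAB : A * B ≠ 0) {p : Fin 2 × ℕ} (hp : degreeOf p (A * B) ≤ 1) {a : E}
    (ha : aeval (Function.update v p a) (A * B) ≠ 0) : degreeOf p A = 1 ∧ degreeOf p B = 0 := by
  have h1 : degreeOf p A ≠ 0 := fun h => by
    have h2 : p ∉ A.vars := fun h3 => mem_vars_iff_degreeOf_ne_zero.1 h3 h
    rw [map_mul, aeval_update_of_notMem a h2, hAv, zero_mul] at ha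
    exact ha rfl
  rw [degreeOf_mul_eq (left_ne_zero_of_mul hAB) (right_ne_zero_of_mul hAB)] at hp
  omega

end Divisibility

/-! ### The factorization of the resultant -/

theorem deltaRes_main_factor [CharZero F]
    (δF : Derivation ℤ F F) (D : Derivation ℤ E E)
    (hD : ∀ a : F, D (algebraMap F E a) = algebraMap F E (δF a))
    (dxy : Derivation ℤ (MvPolynomial (Fin 2 × ℕ) F) (MvPolynomial (Fin 2 × ℕ) F))
    (hdxyC : ∀ a : F, dxy (C a) = C (δF a))
    (hdxyX : ∀ (i : Fin 2) (k : ℕ), dxy (X (i, k)) = X (i, k + 1))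
    (dxyu : Derivation ℤ (MvPolynomial (Fin 3 × ℕ) F) (MvPolynomial (Fin 3 × ℕ) F))
    (hdC : ∀ a : F, dxyu (C a) = C (δF a))
    (hdX : ∀ (i : Fin 3) (k : ℕ), dxyu (X (i, k)) = X (i, k + 1))
    (A : MvPolynomial (Fin 2 × ℕ) F) (hA : Irreducible A)
    (u : E) (P₁ Q₁ P₂ Q₂ : MvPolynomial ℕ F)
    (hd₁ : P₁.totalDegree ≤ 1) (hd₂ : Q₁.totalDegree ≤ 1)
    (hd₃ : P₂.totalDegree ≤ 1) (hd₄ : Q₂.totalDegree ≤ 1)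
    (hpar : IsProperParam F D dxy A u P₁ Q₁ P₂ Q₂)
    (m₁ m₂ : ℕ) (hm₁ : max (ordU P₁) (ordU Q₁) = (m₁ : WithBot ℕ))
    (hm₂ : max (ordU P₂) (ordU Q₂) = (m₂ : WithBot ℕ)) :
    (∃ B : MvPolynomial (Fin 2 × ℕ) F,
        deltaRes F dxyu P₁ Q₁ P₂ Q₂ m₁ m₂ = A * B ∧
        ordXY B < ordXY (deltaRes F dxyu P₁ Q₁ P₂ Q₂ m₁ m₂)) ∧
    MvPolynomial.degreeOf ((0 : Fin 2), m₂) A = 1 ∧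
    MvPolynomial.degreeOf ((1 : Fin 2), m₁) A = 1 := by
  obtain ⟨⟨hu, hP₁, hQ₁, hPQ₁, hP₂, hQ₂, hPQ₂, -, hset⟩, hprop⟩ := hpar
  have hd : IsDiffDer δF dxy := ⟨hdxyC, hdxyX⟩
  have hd' : IsDiffDer δF dxyu := ⟨hdC, hdX⟩
  have hQu₁ := evalD_ne_zero hu hQ₁
  have hQu₂ := evalD_ne_zero hu hQ₂
  have hη₁ : evalD F D u P₁ / evalD F D u Q₁ * evalD F D u Q₁ = evalD F D u P₁ :=
    div_mul_cancel₀ _ hQu₁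
  have hη₂ : evalD F D u P₂ / evalD F D u Q₂ * evalD F D u Q₂ = evalD F D u P₂ :=
    div_mul_cancel₀ _ hQu₂
  set η₁ := evalD F D u P₁ / evalD F D u Q₁
  set η₂ := evalD F D u P₂ / evalD F D u Q₂
  obtain ⟨Δ, hX, hΔ⟩ := exists_symbol δF D hD hu
  -- the generic point of the curve
  let v : Fin 2 × ℕ → E := fun p => D^[p.2] (if p.1 = 0 then η₁ else η₂)
  let U : ℕ → E := fun k => D^[k] u
  have hv : ∀ i k, v (i, k + 1) = D (v (i, k)) := fun i k => Function.iterate_succ_apply' _ _ _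
  have hU : ∀ k, U (k + 1) = D (U k) := fun k => Function.iterate_succ_apply' _ _ _
  have hsat : ∀ f, aeval v f = 0 ↔ f ∈ satSet dxy A := fun f => by
    rw [← hset]
    rfl
  have hAv : aeval v A = 0 := (hsat A).2
    ⟨0, by rw [pow_zero, one_mul]; exact Ideal.subset_span ⟨0, rfl⟩⟩
  have hc₁ := coeff_symbol_frac hX hη₁
  have hc₂ := coeff_symbol_frac hX hη₂
  have hdeg₁ := degree_symbol hu hd₁ hd₂ hPQ₁ hm₁ hη₁ hc₁
  have hdeg₂ := degree_symbol hu hd₃ hd₄ hPQ₂ hm₂ hη₂ hc₂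
  have hdegη : (Δ η₂).degree = (m₂ : ℕ) := by
    rw [← hdeg₂, Polynomial.smul_eq_C_mul, Polynomial.degree_C_mul (neg_ne_zero.2 hQu₂)]
  have htop : ∀ W : Submodule E (Polynomial E), (∀ p ∈ W, twist D p ∈ W) →
      Δ η₁ ∈ W → Δ η₂ ∈ W → W = ⊤ := fun W hW h1 h2 =>
    eq_top_of_symbol_mem hX hΔ hprop hW fun s hs => by
      rcases hs with rfl | rfl
      exacts [h1, h2]
  have hs₁ : ∀ i, Δ (D^[i] η₁) = (twist D)^[i] (Δ η₁) :=
    symbol_iterate hΔ hprop (Set.mem_insert _ _)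
  have hs₂ : ∀ i, Δ (D^[i] η₂) = (twist D)^[i] (Δ η₂) :=
    symbol_iterate hΔ hprop (Set.mem_insert_of_mem _ rfl)
  have hmem : ∀ (W : Submodule E (Polynomial E)) {c : E} (_ : c ≠ 0) {p : Polynomial E},
      c • p ∈ W → p ∈ W := fun W c hc p h => (W.smul_mem_iff hc).1 h
  -- `hli` serves to bound the order of `A` from below; the other two concern the rows of the matrix
  have hli := linearIndependent_twist D m₂ hdegη htop
  have hliL₁ := linearIndependent_twist D m₂ hdeg₂ fun W hW h1 h2 =>
    htop W hW (hmem W (neg_ne_zero.2 hQu₁) h1) (hmem W (neg_ne_zero.2 hQu₂) h2)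
  have hliL₂ := linearIndependent_twist D m₁ hdeg₁ fun W hW h2 h1 =>
    htop W hW (hmem W (neg_ne_zero.2 hQu₁) h1) (hmem W (neg_ne_zero.2 hQu₂) h2)
  have hR := aeval_deltaRes hD hd hd' hd₁ hd₂ hd₃ hd₄ hm₁ hm₂ hv hU hη₁ hη₂
  have hRx := aeval_deltaRes_update_x hD hd hd' hd₁ hd₂ hd₃ hd₄ hm₁ hm₂ hv hU hη₁ hη₂ hQu₁ hc₁ hc₂
    hliL₁
  have hRy := aeval_deltaRes_update_y hD hd hd' hd₁ hd₂ hd₃ hd₄ hm₁ hm₂ hv hU hη₁ hη₂ hQu₂ hc₁ hc₂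
    hliL₂
  have hdx := degreeOf_deltaRes_x hd hd' hd₁ hd₂ hd₃ hd₄ hm₁ hm₂
  have hdy := degreeOf_deltaRes_y hd hd' hd₁ hd₂ hd₃ hd₄ hm₁ hm₂
  have hdvd : A ∣ deltaRes F dxyu P₁ Q₁ P₂ Q₂ m₁ m₂ := by
    refine dvd_of_generic hD hd hA hv hsat hAv Δ (m := m₂) ?_ hR (fun l hl h => ?_) hRx
    · convert hli using 2
      · funext j; exact hs₂ j
      · funext j; exact hs₁ j
    · have h1 := hdx l hl.le
      rw [if_neg (by omega)] at h1
      exact mem_vars_iff_degreeOf_ne_zero.1 h (by omega)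
  obtain ⟨B, hB⟩ := hdvd
  rw [hB] at hRx hRy hdx hdy ⊢
  have hAB : A * B ≠ 0 := fun h => hRx (by rw [h, map_zero])
  obtain ⟨hAx, hBx⟩ := degreeOf_eq_one hAv hAB (by simpa using hdx m₂ le_rfl) hRx
  obtain ⟨hAy, hBy⟩ := degreeOf_eq_one hAv hAB (by simpa using hdy m₁ le_rfl) hRy
  have hmul := fun p => degreeOf_mul_eq (n := p) (left_ne_zero_of_mul hAB) (right_ne_zero_of_mul hAB)
  have hBx' : ∀ l, m₂ ≤ l → ((0 : Fin 2), l) ∉ B.vars := fun l hl h => by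
    have h1 := mem_vars_iff_degreeOf_ne_zero.1 h
    rcases hl.eq_or_lt with rfl | hl'
    · exact h1 hBx
    · have h2 := hdx l hl
      rw [hmul, if_neg (by omega)] at h2
      omega
  have hBy' : ∀ l, m₁ ≤ l → ((1 : Fin 2), l) ∉ B.vars := fun l hl h => by
    have h1 := mem_vars_iff_degreeOf_ne_zero.1 h
    rcases hl.eq_or_lt with rfl | hl'
    · exact h1 hBy
    · have h2 := hdy l hl
      rw [hmul, if_neg (by omega)] at h2
      omega
  have hRx' : ((0 : Fin 2), m₂) ∈ (A * B).vars :=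
    mem_vars_iff_degreeOf_ne_zero.2 (by rw [hmul]; omega)
  have hRy' : ((1 : Fin 2), m₁) ∈ (A * B).vars :=
    mem_vars_iff_degreeOf_ne_zero.2 (by rw [hmul]; omega)
  exact ⟨⟨B, rfl, max_lt ((ordIdx_lt hBx').trans_le (le_ordXY_of_mem hRx'))
    ((ordIdx_lt hBy').trans_le (le_ordXY_of_mem hRy'))⟩, hAx, hAy⟩
end DiffCurve
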